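/- For every ε > 0 there exists C > 0 such that for every prime power q and all integers n ≥ m ≥ (2+ε)·(log n)/(log q), writing u = n/m and a = 1 if m is even and a = 0 if m is odd, one has | p_{n,m,q}/p_{n,m} − G_q(x) | ≤ C·n^{(1+a)/m}·min{m, log(u+1)} / ( m·q^{⌈(m+1)/2⌉} ). -/

import Mathlib

open Real

noncomputable section

/-- Predicate characterizing the Dickman function `ρ : [0,∞) → (0,∞)`:
continuous on `[0,∞)`, positive, equal to `1` on `[0,1]`, and satisfying the
delay differential equation `t·ρ'(t) + ρ(t-1) = 0` for `t > 1`. -/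
def IsDickman (ρ : ℝ → ℝ) : Prop :=
  ContinuousOn ρ (Set.Ici 0) ∧
  (∀ t : ℝ, 0 ≤ t → 0 < ρ t) ∧
  (∀ t ∈ Set.Icc (0:ℝ) 1, ρ t = 1) ∧
  (∀ t : ℝ, 1 < t → HasDerivAt ρ (-(ρ (t - 1)) / t) t)

/-- `ξ(u)`: for `u > 1`, the unique positive solution of `e^ξ = 1 + u·ξ`; otherwise `0`. -/
def xi (u : ℝ) : ℝ :=
  open Classical in
  if h : ∃ x : ℝ, 0 < x ∧ Real.exp x = 1 + u * x then h.choose else 0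

/-- `p_{n,m}`: probability that a uniformly random permutation of `{1,…,n}` is `m`-friable,
i.e. has no cycle of length greater than `m`. -/
def permProb (n m : ℕ) : ℝ :=
  (Nat.card {σ : Equiv.Perm (Fin n) // ∀ c ∈ σ.cycleType, c ≤ m} : ℝ) /
    (Nat.factorial n : ℝ)

/-- `p_{n,m,q}`: proportion of monic polynomials of degree `n` over a finite field `F`
(of cardinality `q`) that are `m`-friable, i.e. all of whose monic irreducible factors
have degree at most `m`. -/
def polyProb (F : Type) [Field F] [Fintype F] (n m : ℕ) : ℝ :=
  (Nat.card {f : Polynomial F // f.Monic ∧ f.natDegree = n ∧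
      ∀ p : Polynomial F, p.Monic → Irreducible p → p ∣ f → p.natDegree ≤ m} : ℝ) /
    (Fintype.card F : ℝ) ^ n

/-- `F_q(z) = ∏_{deg P ≤ m} (1 - (z/q)^{deg P})⁻¹`, the product over monic irreducible
polynomials `P` over `F` of degree at most `m`. -/
def FqFun (F : Type) [Field F] [Fintype F] (m : ℕ) (z : ℝ) : ℝ :=
  ∏ᶠ p ∈ {p : Polynomial F | p.Monic ∧ Irreducible p ∧ p.natDegree ≤ m},
    (1 - (z / (Fintype.card F : ℝ)) ^ p.natDegree)⁻¹

/-- `G_q(z) = F_q(z) · exp(-∑_{i=1}^m z^i/i)`. -/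
def Gq (F : Type) [Field F] [Fintype F] (m : ℕ) (z : ℝ) : ℝ :=
  FqFun F m z * Real.exp (-(∑ i ∈ Finset.Icc 1 m, z ^ i / (i : ℝ)))

/-- The coefficients `d_{m,i}`. -/
def dcoef (m i : ℕ) : ℝ :=
  if i = m then -(1 / (m : ℝ)) * ∑ j ∈ Finset.Icc 2 m, (1 : ℝ) / (j : ℝ)
  else Real.Gamma ((i : ℝ) + (i : ℝ) / (m : ℝ)) /
    (((m : ℝ) - (i : ℝ)) * (Nat.factorial i : ℝ) * Real.Gamma (1 + (i : ℝ) / (m : ℝ)))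

/-- `T(s) = ∫₀^s ((e^t - 1)/t)·((t/m)/(1 - e^{-t/m}) - 1) dt`, integrand extended by `0` at `t = 0`. -/
def Tfun (m : ℕ) (s : ℝ) : ℝ :=
  ∫ t in (0:ℝ)..s,
    if t = 0 then 0 else
      ((Real.exp t - 1) / t) * ((t / (m : ℝ)) / (1 - Real.exp (-t / (m : ℝ))) - 1)

end

/-!
The generating function `B` of `p_{n,m,q}` factors as `G * A`, where `A = exp (∑ Xⁱ / i)` is that of
`p_n = p_{n,m}` and `G` has the sum `G_q(x)` at `x`; hence `p_{n,m,q} = ∑ g_k p_{n-k}`. Every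
polynomial of degree at most `m` is `m`-friable and so is every permutation of at most `m` points,
so `g_k = 0` for `1 ≤ k ≤ m`. The recurrence `n p_n = p_{n-1} + ⋯ + p_{n-m}` makes the ratios
`p_n / p_{n+1}` increasing in `n`, which pins them near the saddle point `x` and gives
`p_{n-k} / p_n = x ^ k (1 + O(k² / (n m)))` for `k ≥ m`. The error is therefore controlled by the
second moment `∑ k² g_k x ^ k`, that is, by the value at `x` of the twice applied Euler operator.
If `X G' = G * L`, this value is `G_q(x)` times `L(x)² + x L'(x)`, and the `j`-th coefficient
of `L` vanishes for `j ≤ m` and counts, for `j > m`, only irreducible polynomials of degree at most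
`j / 2`.
-/

namespace Friable

open Finset

/-! ### Power series and the Euler operator -/

section EulerOperator

open PowerSeries

section Euler

variable {R : Type*} [CommSemiring R]

/-- The Euler operator `X · d/dX` on power series. A generating function `A` given by a product is
handled through its logarithmic derivative, the series `L` with `euler R A = A * L`. -/
noncomputable def euler (R : Type*) [CommSemiring R] : Derivation R R⟦X⟧ R⟦X⟧ :=
  (X : R⟦X⟧) • derivative R

theorem euler_apply (A : R⟦X⟧) : euler R A = X * derivative R A := rfl

theorem coeff_euler (A : R⟦X⟧) (n : ℕ) : coeff n (euler R A) = n * coeff n A := by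
  cases n with
  | zero => simp [euler_apply]
  | succ n => rw [euler_apply, coeff_succ_X_mul, coeff_derivative, mul_comm, Nat.cast_succ]

theorem euler_mul_of_eq {A B L M : R⟦X⟧} (hA : euler R A = A * L) (hB : euler R B = B * M) :
    euler R (A * B) = A * B * (L + M) := by
  rw [Derivation.leibniz, hA, hB]
  simp only [smul_eq_mul]
  ring

theorem euler_prod_of_eq {ι : Type*} {s : Finset ι} {A L : ι → R⟦X⟧}
    (h : ∀ i ∈ s, euler R (A i) = A i * L i) :
    euler R (∏ i ∈ s, A i) = (∏ i ∈ s, A i) * ∑ i ∈ s, L i := by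
  classical
  induction s using Finset.induction_on with
  | empty => simp
  | insert a s ha ih =>
    rw [prod_insert ha, sum_insert ha]
    exact euler_mul_of_eq (h a (mem_insert_self a s)) (ih fun i hi => h i (mem_insert_of_mem hi))

theorem euler_rescale (c : R) (A : R⟦X⟧) : euler R (rescale c A) = rescale c (euler R A) := by
  ext n
  simp only [coeff_euler, coeff_rescale]
  ring

end Euler

section EulerRing

variable {R : Type*} [CommRing R]

theorem euler_subst_X_pow {d : ℕ} (hd : d ≠ 0) (A : R⟦X⟧) :
    euler R (A.subst (X ^ d : R⟦X⟧)) = d • (euler R A).subst (X ^ d : R⟦X⟧) := by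
  simp only [← expand_apply d hd]
  ext n
  simp only [coeff_euler, map_nsmul, coeff_expand]
  split_ifs with h
  · obtain ⟨k, rfl⟩ := h
    rw [Nat.mul_div_cancel_left k (Nat.pos_of_ne_zero hd), nsmul_eq_mul, Nat.cast_mul, mul_assoc]
  · simp

theorem subst_X_pow_mul {d : ℕ} (hd : d ≠ 0) (A B : R⟦X⟧) :
    (A * B).subst (X ^ d : R⟦X⟧) = A.subst (X ^ d : R⟦X⟧) * B.subst (X ^ d : R⟦X⟧) := by
  simp only [← expand_apply d hd, map_mul]

theorem coeff_eq_one_of_euler_eq {A L : R⟦X⟧} {m : ℕ} (h : euler R A = A * L)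
    (hA : ∀ n ≤ m, coeff n A = 1) {j : ℕ} (hj : j ≠ 0) (hjm : j ≤ m) : coeff j L = 1 := by
  have partialSum (n : ℕ) (hn : n ≤ m) : ∑ i ∈ range (n + 1), coeff i L = n := by
    have coeff_eq := congrArg (coeff n) h
    rw [coeff_euler, hA n hn, mul_one, mul_comm A, coeff_mul,
      Nat.sum_antidiagonal_eq_sum_range_succ_mk] at coeff_eq
    rw [coeff_eq]
    refine sum_congr rfl fun i _ => ?_
    rw [hA _ (by omega), mul_one]
  obtain ⟨j, rfl⟩ := Nat.exists_eq_succ_of_ne_zero hj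
  have last := partialSum (j + 1) hjm
  rw [sum_range_succ, partialSum j (by omega)] at last
  push_cast at last
  exact add_left_cancel last

end EulerRing

section SumsTo

/-- The power series `A` converges at the real point `x`, with sum `s`. -/
def SumsTo (A : ℝ⟦X⟧) (x s : ℝ) : Prop := HasSum (fun n => coeff n A * x ^ n) s

namespace SumsTo

variable {A B : ℝ⟦X⟧} {x s t : ℝ}

theorem mul (hA : SumsTo A x s) (hB : SumsTo B x t) : SumsTo (A * B) x (s * t) := by
  have hA' := hA.summable.norm
  have hB' := hB.summable.norm
  have coeff_mul_pow (n : ℕ) : coeff n (A * B) * x ^ n = ∑ kl ∈ antidiagonal n,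
      (coeff kl.1 A * x ^ kl.1) * (coeff kl.2 B * x ^ kl.2) := by
    rw [coeff_mul, sum_mul]
    refine sum_congr rfl fun p hp => ?_
    rw [← mem_antidiagonal.mp hp, pow_add]
    ring
  simp only [SumsTo, coeff_mul_pow]
  rw [← hA.tsum_eq, ← hB.tsum_eq,
    tsum_mul_tsum_eq_tsum_sum_antidiagonal_of_summable_norm hA' hB']
  exact (summable_norm_sum_mul_antidiagonal_of_summable_norm hA' hB').of_norm.hasSum

theorem add (hA : SumsTo A x s) (hB : SumsTo B x t) : SumsTo (A + B) x (s + t) := by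
  simpa [SumsTo, add_mul] using HasSum.add hA hB

theorem one (x : ℝ) : SumsTo 1 x 1 := by
  simpa [SumsTo, coeff_one] using
    hasSum_single (f := fun n => coeff n (1 : ℝ⟦X⟧) * x ^ n) 0 (by simp +contextual [coeff_one])

theorem prod {ι : Type*} {S : Finset ι} {A : ι → ℝ⟦X⟧} {v : ι → ℝ}
    (h : ∀ i ∈ S, SumsTo (A i) x (v i)) : SumsTo (∏ i ∈ S, A i) x (∏ i ∈ S, v i) := by
  classical
  induction S using Finset.induction_on with
  | empty => simpa using one x
  | insert a S ha ih =>
    rw [prod_insert ha, prod_insert ha]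
    exact (h a (mem_insert_self a S)).mul (ih fun i hi => h i (mem_insert_of_mem hi))

theorem rescale (c : ℝ) (h : SumsTo A (c * x) s) : SumsTo (PowerSeries.rescale c A) x s := by
  simpa [SumsTo, coeff_rescale, mul_pow, mul_assoc, mul_comm, mul_left_comm] using h

theorem subst_X_pow {d : ℕ} (hd : d ≠ 0) (h : SumsTo A (x ^ d) s) :
    SumsTo (A.subst (X ^ d : ℝ⟦X⟧)) x s := by
  rw [← expand_apply d hd, SumsTo,
    ← (mul_right_injective₀ hd).hasSum_iff (fun n hn => ?_)]
  · simpa [SumsTo, Function.comp_def, coeff_expand_mul, pow_mul] using h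
  · rw [coeff_expand_of_not_dvd d hd _ fun ⟨k, hk⟩ => hn ⟨k, hk.symm⟩, zero_mul]

theorem exp (x : ℝ) : SumsTo (PowerSeries.exp ℝ) x (Real.exp x) := by
  simpa [SumsTo, coeff_exp, Real.exp_eq_exp_ℝ, div_eq_inv_mul]
    using NormedSpace.expSeries_div_hasSum_exp x

end SumsTo

end SumsTo

section Factors

/-- The power series of `exp (c * X ^ i)`, for `i ≠ 0`. -/
noncomputable def expMonomial (c : ℝ) (i : ℕ) : ℝ⟦X⟧ := (rescale c (exp ℝ)).subst (X ^ i : ℝ⟦X⟧)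

variable {i d : ℕ}

theorem coeff_expMonomial_mul (hi : i ≠ 0) (c : ℝ) (j : ℕ) :
    coeff (i * j) (expMonomial c i) = c ^ j / j.factorial := by
  simp [expMonomial, ← expand_apply i hi, coeff_expand_mul, coeff_rescale, coeff_exp,
    div_eq_mul_inv]

theorem coeff_expMonomial_of_not_dvd (hi : i ≠ 0) (c : ℝ) {n : ℕ} (hn : ¬ i ∣ n) :
    coeff n (expMonomial c i) = 0 := by
  rw [expMonomial, ← expand_apply i hi, coeff_expand_of_not_dvd i hi _ hn]

theorem sumsTo_expMonomial (hi : i ≠ 0) (c x : ℝ) :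
    SumsTo (expMonomial c i) x (Real.exp (c * x ^ i)) :=
  ((SumsTo.exp _).rescale c).subst_X_pow hi

theorem euler_expMonomial (hi : i ≠ 0) (c : ℝ) :
    euler ℝ (expMonomial c i) = expMonomial c i * (C (c * i) * X ^ i) := by
  have euler_exp : euler ℝ (exp ℝ) = exp ℝ * X := by
    rw [euler_apply, derivative_exp, mul_comm]
  rw [expMonomial, euler_subst_X_pow hi, euler_rescale, euler_exp, map_mul, rescale_X,
    subst_X_pow_mul hi]
  simp only [← expand_apply i hi, map_mul, expand_C, expand_X, nsmul_eq_mul, map_natCast]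
  ring

theorem expMonomial_mul_expMonomial_neg (hi : i ≠ 0) (c : ℝ) :
    expMonomial c i * expMonomial (-c) i = 1 := by
  rw [expMonomial, expMonomial, ← subst_X_pow_mul hi, exp_mul_exp_eq_exp_add]
  simp [← expand_apply i hi]

/-- The power series of `1 / (1 - X ^ d)`, for `d ≠ 0`: the Euler factor of an irreducible
polynomial of degree `d`. -/
noncomputable def geometric (d : ℕ) : ℝ⟦X⟧ := (PowerSeries.mk (1 : ℕ → ℝ)).subst (X ^ d : ℝ⟦X⟧)

theorem coeff_geometric (hd : d ≠ 0) (n : ℕ) :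
    coeff n (geometric d) = if d ∣ n then 1 else 0 := by
  rw [geometric, ← expand_apply d hd, coeff_expand]
  simp

theorem sumsTo_geometric (hd : d ≠ 0) {x : ℝ} (hx0 : 0 ≤ x) (hx1 : x < 1) :
    SumsTo (geometric d) x (1 - x ^ d)⁻¹ :=
  SumsTo.subst_X_pow hd <| by
    simpa [SumsTo] using hasSum_geometric_of_lt_one (pow_nonneg hx0 d) (pow_lt_one₀ hx0 hx1 hd)

theorem geometric_mul_one_sub_X_pow (hd : d ≠ 0) : geometric d * (1 - X ^ d) = 1 := by
  have h := congrArg (expand d hd) (mk_one_mul_one_sub_eq_one ℝ)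
  simpa [geometric, ← expand_apply d hd] using h

theorem euler_geometric (hd : d ≠ 0) :
    euler ℝ (geometric d) = geometric d * (C (d : ℝ) * (geometric d - 1)) := by
  have inverse := geometric_mul_one_sub_X_pow hd
  have euler_X_pow : euler ℝ (X ^ d : ℝ⟦X⟧) = C (d : ℝ) * X ^ d := by
    ext n
    rw [coeff_euler, coeff_C_mul, coeff_X_pow]
    split_ifs with h <;> simp [h]
  have euler_inverse := congrArg (euler ℝ) inverse
  rw [Derivation.leibniz, map_sub, euler_X_pow, Derivation.map_one_eq_zero] at euler_inverse
  simp only [smul_eq_mul] at euler_inverse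
  linear_combination geometric d * euler_inverse + (-(C (d : ℝ) * geometric d)
    - euler ℝ (geometric d)) * inverse

end Factors

end EulerOperator

/-! ### Friable permutations -/

section FriablePermutations

open PowerSeries

section Permutations

/-- The order `z_μ = ∏ i ^ (cᵢ) * cᵢ!` of the centralizer of a permutation whose cycle lengths,
fixed points included, are the multiset `μ`, the number `i` occurring `cᵢ` times in `μ`. -/
def centralizerOrder (μ : Multiset ℕ) : ℕ :=
  μ.prod * ∏ i ∈ μ.toFinset, (μ.count i).factorial

theorem centralizerOrder_eq_prod (μ : Multiset ℕ) :
    centralizerOrder μ = ∏ i ∈ μ.toFinset, i ^ μ.count i * (μ.count i).factorial := by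
  rw [centralizerOrder, prod_mul_distrib, Finset.prod_multiset_count]

theorem centralizerOrder_add_replicate_one {μ : Multiset ℕ} (h : 1 ∉ μ) (k : ℕ) :
    centralizerOrder (μ + Multiset.replicate k 1) = k.factorial * centralizerOrder μ := by
  rcases Nat.eq_zero_or_pos k with rfl | hk
  · simp
  have parts : (μ + Multiset.replicate k 1).toFinset = insert 1 μ.toFinset := by
    ext i
    simp [hk.ne', or_comm]
  rw [centralizerOrder_eq_prod, centralizerOrder_eq_prod, parts,
    prod_insert (by simpa using h)]
  congr 1
  · simp [Multiset.count_eq_zero_of_notMem h]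
  · refine prod_congr rfl fun i hi => ?_
    have hi1 : 1 ≠ i := by
      rintro rfl
      exact h (Multiset.mem_toFinset.mp hi)
    simp [Multiset.count_replicate, hi1]

variable {α : Type*} [Fintype α] [DecidableEq α]

theorem exists_perm_partition_eq (p : (Fintype.card α).Partition) :
    ∃ σ : Equiv.Perm α, σ.partition = p := by
  set μ := p.parts.filter (2 ≤ ·)
  have parts_eq : p.parts = μ + Multiset.replicate (p.parts.count 1) 1 := by
    have filter_not : p.parts.filter (¬ 2 ≤ ·) = p.parts.filter (· = 1) :=
      Multiset.filter_congr fun i hi => by have := p.parts_pos hi; omega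
    rw [← Multiset.filter_eq', ← filter_not, Multiset.filter_add_not]
  have sum_eq : μ.sum + p.parts.count 1 = Fintype.card α := by
    conv_rhs => rw [← p.parts_sum, parts_eq]
    simp
  obtain ⟨σ, hσ⟩ := (Equiv.Perm.exists_with_cycleType_iff α).mpr
    ⟨le_of_add_le_left sum_eq.le, fun i hi => (Multiset.mem_filter.mp hi).2⟩
  refine ⟨σ, Nat.Partition.ext ?_⟩
  rw [Equiv.Perm.parts_partition, ← Equiv.Perm.sum_cycleType, hσ, Nat.sub_eq_of_eq_add' sum_eq.symm,
    ← parts_eq]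

theorem card_partition_eq_mul_centralizerOrder (p : (Fintype.card α).Partition) :
    #{σ : Equiv.Perm α | σ.partition = p} * centralizerOrder p.parts =
      (Fintype.card α).factorial := by
  obtain ⟨σ, rfl⟩ := exists_perm_partition_eq p
  have one_notMem : 1 ∉ σ.cycleType := fun h =>
    absurd (Equiv.Perm.two_le_of_mem_cycleType h) (by decide)
  rw [Equiv.Perm.parts_partition, centralizerOrder_add_replicate_one one_notMem,
    ← Equiv.Perm.sum_cycleType, ← Equiv.Perm.card_isConj_mul_eq σ, centralizerOrder, mul_assoc]
  simp only [← Equiv.Perm.partition_eq_of_isConj, isConj_comm (h := σ), Nat.card_eq_fintype_card,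
    Fintype.card_subtype, Set.coe_ofPred]

theorem forall_mem_partition_parts_iff {m : ℕ} (hm : 1 ≤ m) (σ : Equiv.Perm α) :
    (∀ c ∈ σ.partition.parts, c ≤ m) ↔ ∀ c ∈ σ.cycleType, c ≤ m := by
  rw [Equiv.Perm.parts_partition]
  refine ⟨fun h c hc => h c (Multiset.mem_add.mpr (Or.inl hc)), fun h c hc => ?_⟩
  rcases Multiset.mem_add.mp hc with hc | hc
  · exact h c hc
  · exact Multiset.eq_of_mem_replicate hc ▸ hm

/-- The power series `exp (∑ X ^ i / i)`, the sum being over `1 ≤ i ≤ m`: the exponential generating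
function of the `m`-friable permutations, so that its coefficients are the `permProb n m`. -/
noncomputable def permSeries (m : ℕ) : ℝ⟦X⟧ := ∏ i ∈ Icc 1 m, expMonomial (1 / i) i

open scoped PowerSeries.WithPiTopology in
theorem expMonomial_eq_one_add_tsum (c : ℝ) {i : ℕ} (hi : i ≠ 0) :
    expMonomial c i =
      1 + ∑' j : ℕ, (c ^ (j + 1) / (j + 1).factorial) • (X : ℝ⟦X⟧) ^ (i * (j + 1)) := by
  have hasSum : HasSum (fun j : ℕ => (c ^ j / j.factorial) • (X : ℝ⟦X⟧) ^ (i * j))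
      (expMonomial c i) := by
    rw [WithPiTopology.hasSum_iff_hasSum_coeff]
    intro n
    by_cases h : i ∣ n
    · obtain ⟨k, rfl⟩ := h
      rw [coeff_expMonomial_mul hi]
      convert hasSum_single k fun j hj => ?_ using 1
      · simp [coeff_X_pow]
      · simp [coeff_X_pow, hi, hj.symm]
    · rw [coeff_expMonomial_of_not_dvd hi c h]
      convert hasSum_zero using 2 with j
      rw [map_smul, coeff_X_pow, if_neg fun hn => h ⟨j, hn⟩, smul_zero]
  rw [← hasSum.tsum_eq, hasSum.summable.tsum_eq_zero_add]
  simp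

open scoped PowerSeries.WithPiTopology in
theorem permSeries_eq_genFun (m : ℕ) :
    permSeries m = Nat.Partition.genFun
      fun i j => if i ≤ m then ((i : ℝ) ^ j * j.factorial)⁻¹ else 0 := by
  have factor_eq (i : ℕ) (hi : i < m) : expMonomial (1 / ((i + 1 : ℕ) : ℝ)) (i + 1) =
      1 + ∑' j : ℕ, (if i + 1 ≤ m then (((i + 1 : ℕ) : ℝ) ^ (j + 1) * (j + 1).factorial)⁻¹ else 0) •
        (X : ℝ⟦X⟧) ^ ((i + 1) * (j + 1)) := by
    rw [expMonomial_eq_one_add_tsum _ i.succ_ne_zero]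
    simp only [Nat.succ_le_of_lt hi, if_true, inv_pow, mul_inv, div_eq_mul_inv, one_mul]
  refine HasProd.unique ?_ (Nat.Partition.hasProd_genFun _)
  rw [permSeries, ← Ico_add_one_right_eq_Icc, prod_Ico_eq_prod_range, Nat.add_sub_cancel]
  simp only [add_comm 1]
  rw [prod_congr rfl fun i hi => factor_eq i (mem_range.mp hi)]
  exact hasProd_prod_of_ne_finset_one fun i hi => by
    have hi : ¬ i + 1 ≤ m := by simpa using hi
    simp only [if_neg hi, zero_smul, tsum_zero, add_zero]

theorem coeff_permSeries (m n : ℕ) :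
    coeff n (permSeries m) = ∑ p : n.Partition with ∀ c ∈ p.parts, c ≤ m,
      (centralizerOrder p.parts : ℝ)⁻¹ := by
  rw [permSeries_eq_genFun, Nat.Partition.coeff_genFun, sum_filter]
  refine sum_congr rfl fun p _ => ?_
  simp only [Finsupp.prod, Multiset.toFinsupp_support, Multiset.toFinsupp_apply]
  split_ifs with h
  · rw [centralizerOrder_eq_prod, Nat.cast_prod, ← prod_inv_distrib]
    refine prod_congr rfl fun i hi => ?_
    rw [if_pos (h i (Multiset.mem_toFinset.mp hi)), Nat.cast_mul, Nat.cast_pow]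
  · push Not at h
    obtain ⟨c, hc, hcm⟩ := h
    exact prod_eq_zero (Multiset.mem_toFinset.mpr hc) (if_neg hcm.not_ge)

theorem card_friable_perm {m : ℕ} (hm : 1 ≤ m) :
    (Nat.card {σ : Equiv.Perm α // ∀ c ∈ σ.cycleType, c ≤ m} : ℝ) =
      (Fintype.card α).factorial * coeff (Fintype.card α) (permSeries m) := by
  simp only [← forall_mem_partition_parts_iff hm]
  rw [Nat.card_eq_fintype_card, Fintype.card_subtype, coeff_permSeries, mul_sum,
    card_eq_sum_card_fiberwise (f := Equiv.Perm.partition)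
      (t := {p | ∀ c ∈ p.parts, c ≤ m}) fun σ hσ => by simpa using hσ, Nat.cast_sum]
  refine sum_congr rfl fun p hp => ?_
  have order_ne_zero : (centralizerOrder p.parts : ℝ) ≠ 0 := by
    have := (Fintype.card α).factorial_ne_zero
    rw [← card_partition_eq_mul_centralizerOrder p] at this
    exact_mod_cast right_ne_zero_of_mul this
  rw [← card_partition_eq_mul_centralizerOrder p, Nat.cast_mul, mul_inv_cancel_right₀ order_ne_zero,
    filter_filter]
  congr 2
  refine filter_congr fun σ _ => and_iff_right_of_imp ?_
  rintro rfl
  simpa using hp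

theorem permProb_eq_coeff (n : ℕ) {m : ℕ} (hm : 1 ≤ m) : permProb n m = coeff n (permSeries m) := by
  rw [permProb, card_friable_perm hm, Fintype.card_fin,
    mul_div_cancel_left₀ _ (by exact_mod_cast n.factorial_ne_zero)]

end Permutations

end FriablePermutations

/-! ### The friable recurrence and its saddle point -/

section MonotoneRatio

variable {P : ℕ → ℝ} {i j k l : ℕ}

theorem le_ratio_pow_mul (hP : ∀ n, 0 < P n) (hr : Monotone fun n => P n / P (n + 1))
    (h : j + i ≤ k + 1) : P j ≤ (P k / P (k + 1)) ^ i * P (j + i) := by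
  induction i with
  | zero => simp
  | succ i ih =>
    have step : P (j + i) ≤ P k / P (k + 1) * P (j + (i + 1)) :=
      (div_le_iff₀ (hP _)).mp (hr (show j + i ≤ k by omega))
    calc P j ≤ (P k / P (k + 1)) ^ i * P (j + i) := ih (by omega)
      _ ≤ (P k / P (k + 1)) ^ i * (P k / P (k + 1) * P (j + (i + 1))) := by
        gcongr
        exact pow_nonneg (div_pos (hP _) (hP _)).le i
      _ = _ := by ring

theorem ratio_pow_mul_le (hP : ∀ n, 0 < P n) (hr : Monotone fun n => P n / P (n + 1))
    (h : l ≤ j) : (P l / P (l + 1)) ^ i * P (j + i) ≤ P j := by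
  induction i with
  | zero => simp
  | succ i ih =>
    have step : P l / P (l + 1) * P (j + (i + 1)) ≤ P (j + i) :=
      (le_div_iff₀ (hP _)).mp (hr (show l ≤ j + i by omega))
    calc (P l / P (l + 1)) ^ (i + 1) * P (j + (i + 1))
        = (P l / P (l + 1)) ^ i * (P l / P (l + 1) * P (j + (i + 1))) := by ring
      _ ≤ (P l / P (l + 1)) ^ i * P (j + i) := by
        gcongr
        exact pow_nonneg (div_pos (hP _) (hP _)).le i
      _ ≤ P j := ih

end MonotoneRatio

section Recurrence

/-- The recurrence satisfied by the friable probabilities `P n = p_{n,m}`: in a random permutation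
of `n` points, the cycle of a given point has length `i` with probability `1 / n`. -/
structure IsFriableSequence (m : ℕ) (P : ℕ → ℝ) : Prop where
  one_le : 1 ≤ m
  map_zero : P 0 = 1
  mul_eq_sum (n : ℕ) : n * P n = ∑ i ∈ Icc 1 m, if i ≤ n then P (n - i) else 0

namespace IsFriableSequence

variable {m : ℕ} {P : ℕ → ℝ} (h : IsFriableSequence m P) {n k : ℕ}
include h

theorem mul_eq_sum_Ico (n : ℕ) : n * P n = ∑ j ∈ Ico (n - m) n, P j := by
  rw [h.mul_eq_sum, ← sum_filter]
  refine sum_nbij' (n - ·) (n - ·) ?_ ?_ ?_ ?_ ?_ <;> intro i hi <;>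
    simp only [mem_Ico, mem_filter, mem_Icc] at hi ⊢ <;> omega

theorem pos (n : ℕ) : 0 < P n := by
  induction n using Nat.strong_induction_on with
  | _ n ih =>
    rcases Nat.eq_zero_or_pos n with rfl | hn
    · simp [h.map_zero]
    have sum_pos : 0 < ∑ j ∈ Ico (n - m) n, P j :=
      sum_pos (fun j hj => ih j (mem_Ico.mp hj).2)
        ⟨n - 1, mem_Ico.mpr (by have := h.one_le; omega)⟩
    rw [← h.mul_eq_sum_Ico] at sum_pos
    exact pos_of_mul_pos_right sum_pos n.cast_nonneg

theorem add_one_mul_eq_sum (n : ℕ) : (n + 1) * P n = ∑ j ∈ Ico (n - m) (n + 1), P j := by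
  rw [sum_Ico_succ_top (Nat.sub_le n m), ← h.mul_eq_sum_Ico]
  ring

theorem add_one_mul_sub (n : ℕ) :
    (n + 1) * (P n - P (n + 1)) = if m ≤ n then P (n - m) else 0 := by
  have hsucc := h.mul_eq_sum_Ico (n + 1)
  rw [mul_sub, h.add_one_mul_eq_sum]
  push_cast at hsucc
  rw [hsucc, sub_eq_iff_eq_add]
  split_ifs with hmn
  · rw [Nat.sub_add_comm hmn, sum_eq_sum_Ico_succ_bot (by omega)]
  · rw [Nat.sub_eq_zero_of_le (by omega), Nat.sub_eq_zero_of_le (by omega), zero_add]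

theorem antitone : Antitone P := by
  refine antitone_nat_of_succ_le fun n => ?_
  have diff := h.add_one_mul_sub n
  have diff_nonneg : 0 ≤ (n + 1) * (P n - P (n + 1)) := by
    rw [diff]
    split_ifs
    exacts [(h.pos _).le, le_rfl]
  linarith [nonneg_of_mul_nonneg_right diff_nonneg (by positivity : (0 : ℝ) < n + 1)]

theorem one_le_ratio (k : ℕ) : 1 ≤ P k / P (k + 1) :=
  (one_le_div (h.pos _)).mpr (h.antitone k.le_succ)

theorem mul_succ_le_of_ratio_le
    (hr : ∀ k < n, P k / P (k + 1) ≤ P (k + 1) / P (k + 1 + 1)) (hmn : m ≤ n) :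
    (n + 2) * P (n + 1) * P (n - m) ≤ (n + 1) * P n * P (n - m + 1) := by
  have ratio_le (j : ℕ) (hj : n - m ≤ j) : j ≤ n →
      P (n - m) / P (n - m + 1) ≤ P j / P (j + 1) := by
    induction j, hj using Nat.le_induction with
    | base => simp
    | succ j _ ih => exact fun hjn => (ih (by omega)).trans (hr j hjn)
  have sum_succ := h.add_one_mul_eq_sum (n + 1)
  rw [Nat.sub_add_comm hmn, ← sum_Ico_add' P (n - m) (n + 1) 1] at sum_succ
  push_cast at sum_succ
  rw [h.add_one_mul_eq_sum n, show (n : ℝ) + 2 = n + 1 + 1 by ring, sum_succ, sum_mul, sum_mul]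
  refine sum_le_sum fun j hj => ?_
  rw [mem_Ico] at hj
  have := (div_le_div_iff₀ (h.pos _) (h.pos _)).mp (ratio_le j hj.1 (by omega))
  linarith

theorem monotone_ratio : Monotone fun n => P n / P (n + 1) := by
  refine monotone_nat_of_le_succ fun n => ?_
  induction n using Nat.strong_induction_on with
  | _ n ih =>
    rw [div_le_div_iff₀ (h.pos _) (h.pos _)]
    have diff := h.add_one_mul_sub n
    have diff_succ := h.add_one_mul_sub (n + 1)
    have hn := h.pos n
    have hn1 := h.pos (n + 1)
    by_cases hmn : m ≤ n
    · have key := h.mul_succ_le_of_ratio_le ih hmn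
      rw [if_pos hmn] at diff
      rw [if_pos (by omega), Nat.sub_add_comm hmn] at diff_succ
      push_cast at diff_succ
      rw [← diff, ← diff_succ] at key
      have : 0 ≤ (n + 1) * (n + 2) * (P (n + 1) * P (n + 1) - P n * P (n + 1 + 1)) := by linarith
      have := nonneg_of_mul_nonneg_right this (by positivity)
      linarith
    · rw [if_neg hmn] at diff
      have : P n = P (n + 1) := sub_eq_zero.mp ((mul_eq_zero.mp diff).resolve_left (by positivity))
      rw [this]
      exact mul_le_mul_of_nonneg_left (h.antitone (Nat.le_succ _)) hn1.le

end IsFriableSequence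

end Recurrence

section GeomSum

/-- `∑ yⁱ` over `1 ≤ i ≤ m`; the saddle point `x` of the theorem solves `geomSum m x = n`. -/
def geomSum (m : ℕ) (y : ℝ) : ℝ := ∑ i ∈ Icc 1 m, y ^ i

variable {m : ℕ} {y z : ℝ}

theorem geomSum_lt_geomSum (hm : 1 ≤ m) (hy : 0 ≤ y) (hyz : y < z) : geomSum m y < geomSum m z :=
  sum_lt_sum_of_nonempty ⟨1, by simpa using hm⟩ fun i hi =>
    pow_lt_pow_left₀ hyz hy (by have := (mem_Icc.mp hi).1; omega)

theorem half_mul_geomSum_le (hy : 1 ≤ y) (m : ℕ) :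
    (m + 1) / 2 * geomSum m y ≤ ∑ i ∈ Icc 1 m, (i : ℝ) * y ^ i := by
  rcases Nat.eq_zero_or_pos m with rfl | hm
  · simp [geomSum]
  have chebyshev : (∑ i ∈ Icc 1 m, (i : ℝ)) * geomSum m y ≤ m * ∑ i ∈ Icc 1 m, (i : ℝ) * y ^ i := by
    simpa [geomSum] using ((Nat.mono_cast (α := ℝ)).monovary
      (pow_right_mono₀ hy)).monovaryOn (Icc 1 m : Finset ℕ) |>.sum_mul_sum_le_card_mul_sum
  have sum_id : ∑ i ∈ Icc 1 m, (i : ℝ) = m * ((m + 1) / 2) := by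
    clear chebyshev hm
    induction m with
    | zero => simp
    | succ m ih =>
      rw [sum_Icc_succ_top (by omega), ih]
      push_cast
      ring
  rw [sum_id, mul_assoc] at chebyshev
  exact le_of_mul_le_mul_left chebyshev (by exact_mod_cast hm)

theorem geomSum_mul_le (hy : 1 ≤ y) {η : ℝ} (hη : 0 ≤ η) (m : ℕ) :
    geomSum m y * (1 + η * (m + 1) / 2) ≤ geomSum m (y * (1 + η)) := by
  calc geomSum m y * (1 + η * (m + 1) / 2)
      = geomSum m y + η * ((m + 1) / 2 * geomSum m y) := by ring
    _ ≤ geomSum m y + η * ∑ i ∈ Icc 1 m, (i : ℝ) * y ^ i := by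
      gcongr
      exact half_mul_geomSum_le hy m
    _ = ∑ i ∈ Icc 1 m, y ^ i * (1 + i * η) := by
      rw [geomSum, mul_sum, ← sum_add_distrib]
      exact sum_congr rfl fun _ _ => by ring
    _ ≤ geomSum m (y * (1 + η)) := by
      refine sum_le_sum fun i _ => ?_
      rw [mul_pow]
      gcongr
      exact one_add_mul_le_pow (by linarith) i

end GeomSum

section SaddlePoint

namespace IsFriableSequence

variable {m : ℕ} {P : ℕ → ℝ} (h : IsFriableSequence m P) {n k : ℕ} {x : ℝ}
include h

theorem add_one_le_geomSum_ratio (k : ℕ) : (k : ℝ) + 1 ≤ geomSum m (P k / P (k + 1)) := by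
  refine le_of_mul_le_mul_right ?_ (h.pos (k + 1))
  have sum_eq := h.mul_eq_sum (k + 1)
  push_cast at sum_eq
  rw [sum_eq, geomSum, sum_mul]
  refine sum_le_sum fun i _ => ?_
  split_ifs with hi
  · simpa [Nat.sub_add_cancel hi] using
      le_ratio_pow_mul h.pos h.monotone_ratio (j := k + 1 - i) (i := i) (k := k) (by omega)
  · exact mul_nonneg (pow_nonneg (zero_le_one.trans (h.one_le_ratio k)) i) (h.pos _).le

theorem geomSum_ratio_le (k : ℕ) : geomSum m (P k / P (k + 1)) ≤ k + m := by
  refine le_of_mul_le_mul_right ?_ (h.pos (k + m))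
  have sum_eq := h.mul_eq_sum (k + m)
  push_cast at sum_eq
  rw [sum_eq, geomSum, sum_mul]
  refine sum_le_sum fun i hi => ?_
  have him := (mem_Icc.mp hi).2
  rw [if_pos (by omega)]
  simpa [Nat.sub_add_cancel (show i ≤ k + m by omega)] using
    ratio_pow_mul_le h.pos h.monotone_ratio (l := k) (j := k + m - i) (i := i) (by omega)

theorem ratio_le_saddle_mul (hx : 1 ≤ x) (hxn : geomSum m x = n + 1) :
    P n / P (n + 1) ≤ x * (1 + 2 / (n + 1)) := by
  by_contra! hlt
  have hpos : 0 ≤ x * (1 + 2 / ((n : ℝ) + 1)) := by positivity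
  have growth := geomSum_mul_le hx (by positivity : 0 ≤ 2 / ((n : ℝ) + 1)) m
  have := (geomSum_lt_geomSum h.one_le hpos hlt).trans_le (h.geomSum_ratio_le n)
  rw [hxn] at growth
  have : ((n : ℝ) + 1) * (1 + 2 / (n + 1) * (m + 1) / 2) = n + 1 + (m + 1) := by field_simp
  linarith

theorem saddle_mul_le_ratio (hx : 0 ≤ x) (hxn : geomSum m x = n) {j : ℕ}
    (hj : 2 * j ≤ n) (hjn : j < n) :
    x * (1 - 4 * j / (n * m)) ≤ P (n - (j + 1)) / P (n - (j + 1) + 1) := by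
  set y := P (n - (j + 1)) / P (n - (j + 1) + 1)
  set δ : ℝ := 4 * j / (n * m)
  by_contra! hlt
  have hm : (0 : ℝ) < m := by exact_mod_cast h.one_le
  have hn : (0 : ℝ) < n := by exact_mod_cast (Nat.zero_lt_of_lt hjn)
  have hδ : 0 ≤ δ := by positivity
  have hy : 1 ≤ y := h.one_le_ratio _
  have below : y * (1 + δ) < x := by
    calc y * (1 + δ) < x * (1 - δ) * (1 + δ) := by gcongr
      _ ≤ x := by nlinarith [mul_nonneg hx (sq_nonneg δ)]
  have geomSum_lt : geomSum m (y * (1 + δ)) < n :=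
    hxn ▸ geomSum_lt_geomSum h.one_le (by positivity) below
  have lower : (n : ℝ) - j ≤ geomSum m y := by
    convert h.add_one_le_geomSum_ratio (n - (j + 1)) using 1
    rw [Nat.cast_sub hjn]
    push_cast
    ring
  set a : ℝ := 2 * j / n
  have ha : a * n = 2 * j := div_mul_cancel₀ _ hn.ne'
  have ha1 : a ≤ 1 := (div_le_one hn).mpr (by exact_mod_cast hj)
  have a_le : a ≤ δ * (m + 1) / 2 := by
    have : δ * (m + 1) / 2 = a + a / m := by
      simp only [δ, a]
      field_simp
      ring
    rw [this]
    exact le_add_of_nonneg_right (by positivity)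
  have hjn' : (0 : ℝ) ≤ n - j := sub_nonneg.mpr (by exact_mod_cast hjn.le)
  have : (n : ℝ) ≤ geomSum m (y * (1 + δ)) :=
    calc (n : ℝ) ≤ (n - j) * (1 + a) := by nlinarith [j.cast_nonneg (α := ℝ)]
      _ ≤ geomSum m y * (1 + δ * (m + 1) / 2) :=
        mul_le_mul lower (by linarith) (by positivity) (hjn'.trans lower)
      _ ≤ geomSum m (y * (1 + δ)) := geomSum_mul_le hy hδ m
  linarith

theorem le_saddle_pow_mul (hx : 1 ≤ x) (hn : 1 ≤ n) (hxn : geomSum m x = n) (hkn : k ≤ n) :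
    P (n - k) ≤ (1 + 2 / n) ^ k * (x ^ k * P n) := by
  have ratio_le : P (n - 1) / P (n - 1 + 1) ≤ x * (1 + 2 / n) := by
    have hcast : ((n - 1 : ℕ) : ℝ) + 1 = n := by exact_mod_cast Nat.sub_add_cancel hn
    simpa only [hcast] using h.ratio_le_saddle_mul (n := n - 1) hx (by rw [hxn, hcast])
  calc P (n - k) ≤ (P (n - 1) / P (n - 1 + 1)) ^ k * P (n - k + k) :=
        le_ratio_pow_mul h.pos h.monotone_ratio (by omega)
    _ ≤ (x * (1 + 2 / n)) ^ k * P n := by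
        rw [Nat.sub_add_cancel hkn]
        have := zero_le_one.trans (h.one_le_ratio (n - 1))
        have := (h.pos n).le
        gcongr
    _ = _ := by rw [mul_pow]; ring

theorem saddle_pow_mul_le (hx : 0 ≤ x) (hmn : m ≤ n) (hxn : geomSum m x = n) (k : ℕ) :
    (1 - 4 * k ^ 2 / (n * m)) * (x ^ k * P n) ≤ if k ≤ n then P (n - k) else 0 := by
  have hm : (0 : ℝ) < m := by exact_mod_cast h.one_le
  have hn : (0 : ℝ) < n := by exact_mod_cast h.one_le.trans hmn
  have hmn' : (m : ℝ) ≤ n := by exact_mod_cast hmn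
  have hP := (h.pos n).le
  rcases le_or_gt ((n : ℝ) * m) (4 * k ^ 2) with hlarge | hsmall
  · calc _ ≤ 0 := mul_nonpos_of_nonpos_of_nonneg
          (sub_nonpos.mpr ((one_le_div (by positivity)).mpr hlarge)) (by positivity)
      _ ≤ _ := by split_ifs; exacts [(h.pos _).le, le_rfl]
  rcases Nat.eq_zero_or_pos k with rfl | hk
  · simp
  have h2k : 2 * k < n := by
    have : (2 * k : ℝ) ^ 2 < (n : ℝ) ^ 2 := by nlinarith
    exact_mod_cast lt_of_pow_lt_pow_left₀ 2 n.cast_nonneg this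
  rw [if_pos (by omega)]
  have small : 4 * (k : ℝ) / (n * m) ≤ 1 := by
    rw [div_le_one (by positivity)]
    nlinarith [(by exact_mod_cast hk : (1 : ℝ) ≤ k)]
  have ratio_ge : x * (1 - 4 * k / (n * m)) ≤ P (n - k) / P (n - k + 1) := by
    have := h.saddle_mul_le_ratio hx hxn (j := k - 1) (by omega) (by omega)
    rw [Nat.sub_add_cancel hk] at this
    refine le_trans ?_ this
    gcongr
    exact Nat.sub_le k 1
  calc (1 - 4 * k ^ 2 / (n * m)) * (x ^ k * P n)
      = (1 + k * -(4 * k / (n * m))) * (x ^ k * P n) := by ring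
    _ ≤ (1 + -(4 * k / (n * m))) ^ k * (x ^ k * P n) := by
        gcongr
        exact one_add_mul_le_pow (by linarith) k
    _ = (x * (1 - 4 * k / (n * m))) ^ k * P n := by
        rw [← sub_eq_add_neg, mul_pow]
        ring
    _ ≤ (P (n - k) / P (n - k + 1)) ^ k * P (n - k + k) := by
        rw [Nat.sub_add_cancel (by omega)]
        have : 0 ≤ x * (1 - 4 * k / (n * m)) := mul_nonneg hx (by linarith)
        gcongr
    _ ≤ P (n - k) := ratio_pow_mul_le h.pos h.monotone_ratio le_rfl

end IsFriableSequence

theorem one_add_two_div_pow_le {k n : ℕ} (hn : 1 ≤ n) (hkn : k ≤ n) :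
    (1 + 2 / (n : ℝ)) ^ k ≤ 1 + 2 * Real.exp 2 * (k / n) := by
  have hn' : (0 : ℝ) < n := by exact_mod_cast hn
  set t : ℝ := k / n
  have ht : t ≤ 1 := (div_le_one hn').mpr (by exact_mod_cast hkn)
  have ht0 : 0 ≤ t := by positivity
  have one_sub_le := Real.add_one_le_exp (-(2 * t))
  have exp_le : Real.exp (2 * t) ≤ Real.exp 2 := Real.exp_le_exp.mpr (by linarith)
  have inverse : Real.exp (2 * t) * Real.exp (-(2 * t)) = 1 := by rw [← Real.exp_add]; simp
  calc (1 + 2 / (n : ℝ)) ^ k ≤ Real.exp (2 / n) ^ k := by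
        gcongr
        linarith [Real.add_one_le_exp (2 / (n : ℝ))]
    _ = Real.exp (2 * t) := by
        rw [← Real.exp_nat_mul]
        congr 1
        simp only [t]
        ring
    _ ≤ 1 + Real.exp (2 * t) * (2 * t) := by nlinarith [Real.exp_pos (2 * t)]
    _ ≤ 1 + 2 * Real.exp 2 * t := by nlinarith

theorem IsFriableSequence.abs_sub_saddle_pow_mul_le {m : ℕ} {P : ℕ → ℝ}
    (h : IsFriableSequence m P) {n k : ℕ} {x : ℝ} (hx : 1 ≤ x) (hmn : m ≤ n)
    (hxn : geomSum m x = n) (hmk : m ≤ k) :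
    |(if k ≤ n then P (n - k) else 0) - x ^ k * P n| ≤
      (2 * Real.exp 2 + 4) * (k ^ 2 / (n * m)) * (x ^ k * P n) := by
  have hm : (0 : ℝ) < m := by exact_mod_cast h.one_le
  have hn : (0 : ℝ) < n := by exact_mod_cast h.one_le.trans hmn
  have hmk' : (m : ℝ) ≤ k := by exact_mod_cast hmk
  have main_pos : 0 < x ^ k * P n := mul_pos (by positivity) (h.pos n)
  have exp_pos := Real.exp_pos 2
  set s : ℝ := k ^ 2 / (n * m)
  have hs : 0 ≤ s := by positivity
  have div_le : (k : ℝ) / n ≤ s := by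
    rw [div_le_div_iff₀ hn (by positivity)]
    nlinarith [mul_nonneg hn.le (mul_nonneg (hm.le.trans hmk') (sub_nonneg.mpr hmk'))]
  have upper : (if k ≤ n then P (n - k) else 0) ≤ (1 + 2 * Real.exp 2 * s) * (x ^ k * P n) := by
    split_ifs with hkn
    · refine (h.le_saddle_pow_mul hx (by exact_mod_cast hn) hxn hkn).trans ?_
      gcongr
      exact (one_add_two_div_pow_le (by exact_mod_cast hn) hkn).trans (by gcongr)
    · positivity
  have lower := h.saddle_pow_mul_le (zero_le_one.trans hx) hmn hxn k
  rw [mul_div_assoc] at lower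
  rw [abs_sub_le_iff]
  have s_mul_nonneg := mul_nonneg hs main_pos.le
  have exp_mul_nonneg := mul_nonneg exp_pos.le s_mul_nonneg
  constructor <;> nlinarith

end SaddlePoint

/-! ### Friable polynomials -/

section FriablePolynomials

open Polynomial

section FactorsIn

variable {F : Type*} [Field F]

/-- The monic polynomials of degree `n` all of whose monic irreducible factors lie in `S`. -/
def monicsFactoringIn (S : Finset F[X]) (n : ℕ) : Set F[X] :=
  {f | f.Monic ∧ f.natDegree = n ∧ ∀ p : F[X], p.Monic → Irreducible p → p ∣ f → p ∈ S}

theorem monicsFactoringIn_empty (n : ℕ) :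
    monicsFactoringIn (∅ : Finset F[X]) n = if n = 0 then {1} else ∅ := by
  ext f
  refine ⟨fun ⟨monic, deg, factors⟩ => ?_, fun hf => ?_⟩
  · have hn : n = 0 := by
      by_contra hn
      obtain ⟨p, hp, irr, dvd⟩ := exists_monic_irreducible_factor f fun hu =>
        hn (deg ▸ natDegree_eq_zero_of_isUnit hu)
      exact notMem_empty p (factors p hp irr dvd)
    rw [if_pos hn]
    exact monic.natDegree_eq_zero.mp (deg.trans hn)
  · split_ifs at hf with hn
    · obtain rfl : f = 1 := hf
      exact ⟨monic_one, natDegree_one.trans hn.symm, fun p _ irr dvd =>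
        absurd (isUnit_of_dvd_one dvd) irr.not_isUnit⟩
    · exact absurd hf (Set.notMem_empty f)

variable [DecidableEq F[X]] {S : Finset F[X]} {P f : F[X]} {n : ℕ}

theorem mem_monicsFactoringIn_insert_iff_of_not_dvd (hPf : ¬ P ∣ f) :
    f ∈ monicsFactoringIn (insert P S) n ↔ f ∈ monicsFactoringIn S n := by
  refine and_congr_right fun _ => and_congr_right fun _ => forall_congr' fun p =>
    forall₃_congr fun _ _ dvd => ?_
  rw [mem_insert, or_iff_right]
  rintro rfl
  exact hPf dvd

theorem mul_mem_monicsFactoringIn_insert_iff (hP : P.Monic) (hPi : Irreducible P) :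
    P * f ∈ monicsFactoringIn (insert P S) n ↔
      P.natDegree ≤ n ∧ f ∈ monicsFactoringIn (insert P S) (n - P.natDegree) := by
  constructor
  · rintro ⟨monic, deg, factors⟩
    have hf : f.Monic := hP.of_mul_monic_left monic
    rw [hP.natDegree_mul hf] at deg
    exact ⟨by omega, hf, by omega, fun p hp irr dvd => factors p hp irr (dvd.mul_left P)⟩
  · rintro ⟨hn, monic, deg, factors⟩
    refine ⟨hP.mul monic, by rw [hP.natDegree_mul monic]; omega, fun p hp irr dvd => ?_⟩
    rcases irr.prime.dvd_or_dvd dvd with hpP | hpf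
    · rw [eq_of_monic_of_associated hp hP (irr.associated_of_dvd hPi hpP)]
      exact mem_insert_self P S
    · exact factors p hp irr hpf

theorem monicsFactoringIn_insert (hP : P.Monic) (hPi : Irreducible P) (hPS : P ∉ S) (n : ℕ) :
    monicsFactoringIn (insert P S) n = monicsFactoringIn S n ∪
      if P.natDegree ≤ n then (P * ·) '' monicsFactoringIn (insert P S) (n - P.natDegree)
      else ∅ := by
  ext f
  by_cases hPf : P ∣ f
  · have notMem : f ∉ monicsFactoringIn S n := fun hf => hPS (hf.2.2 P hP hPi hPf)
    obtain ⟨g, rfl⟩ := hPf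
    rw [mul_mem_monicsFactoringIn_insert_iff hP hPi, Set.mem_union, or_iff_right notMem]
    split_ifs with hn <;> simp [hn, hP.ne_zero]
  · rw [mem_monicsFactoringIn_insert_iff_of_not_dvd hPf, Set.mem_union, or_iff_left]
    split_ifs
    · rintro ⟨g, _, rfl⟩
      exact hPf (dvd_mul_right P g)
    · exact Set.notMem_empty f

end FactorsIn

section FiniteField

variable {F : Type*} [Field F] [Finite F]

/-- Monic polynomials of degree `n` are determined by their `n` lower coefficients. -/
noncomputable def monicEquivFun (F : Type*) [Field F] (n : ℕ) :
    {f : F[X] // f.Monic ∧ f.natDegree = n} ≃ (Fin n → F) :=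
  (monicEquivDegreeLT n).trans (degreeLTEquiv F n).toEquiv

theorem finite_setOf_monic_natDegree_eq (n : ℕ) : {f : F[X] | f.Monic ∧ f.natDegree = n}.Finite :=
  Set.finite_coe_iff.mp (Finite.of_equiv _ (monicEquivFun F n).symm)

theorem finite_monicsFactoringIn (S : Finset F[X]) (n : ℕ) : (monicsFactoringIn S n).Finite :=
  (finite_setOf_monic_natDegree_eq n).subset fun _ hf => ⟨hf.1, hf.2.1⟩

theorem ncard_monicsFactoringIn_insert [DecidableEq F[X]] {S : Finset F[X]} {P : F[X]}
    (hP : P.Monic) (hPi : Irreducible P) (hPS : P ∉ S) (n : ℕ) :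
    (monicsFactoringIn (insert P S) n).ncard = (monicsFactoringIn S n).ncard +
      if P.natDegree ≤ n then (monicsFactoringIn (insert P S) (n - P.natDegree)).ncard else 0 := by
  rw [monicsFactoringIn_insert hP hPi hPS n]
  split_ifs
  · rw [Set.ncard_union_eq ?_ (finite_monicsFactoringIn _ _)
        ((finite_monicsFactoringIn _ _).image _),
      Set.ncard_image_of_injective _ (mul_right_injective₀ hP.ne_zero)]
    rw [Set.disjoint_left]
    rintro f hf ⟨g, _, rfl⟩
    exact hPS (hf.2.2 P hP hPi (dvd_mul_right P g))
  · simp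

theorem coeff_prod_geometric (S : Finset F[X]) (hS : ∀ P ∈ S, P.Monic ∧ Irreducible P) (n : ℕ) :
    PowerSeries.coeff n (∏ P ∈ S, geometric P.natDegree) = (monicsFactoringIn S n).ncard := by
  classical
  suffices h : (PowerSeries.mk fun n => ((monicsFactoringIn S n).ncard : ℝ)) =
      ∏ P ∈ S, geometric P.natDegree by rw [← h, PowerSeries.coeff_mk]
  induction S using Finset.induction_on with
  | empty =>
    ext n
    rw [prod_empty, PowerSeries.coeff_mk, monicsFactoringIn_empty, PowerSeries.coeff_one]
    split_ifs <;> simp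
  | insert P S hPS ih =>
    obtain ⟨hP, hPi⟩ := hS P (mem_insert_self P S)
    rw [prod_insert hPS, ← ih fun Q hQ => hS Q (mem_insert_of_mem hQ)]
    set A := PowerSeries.mk fun n => ((monicsFactoringIn (insert P S) n).ncard : ℝ)
    set B := PowerSeries.mk fun n => ((monicsFactoringIn S n).ncard : ℝ)
    have split : A = B + A * PowerSeries.X ^ P.natDegree := by
      ext n
      simp only [A, B, map_add, PowerSeries.coeff_mul_X_pow', PowerSeries.coeff_mk,
        ncard_monicsFactoringIn_insert hP hPi hPS n]
      push_cast
      rfl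
    have inverse := geometric_mul_one_sub_X_pow hPi.natDegree_pos.ne'
    linear_combination geometric P.natDegree * split - A * inverse

theorem finite_setOf_monic_irreducible (F : Type*) [Field F] [Finite F] (m : ℕ) :
    {P : F[X] | P.Monic ∧ Irreducible P ∧ P.natDegree ≤ m}.Finite :=
  ((Set.finite_Iic m).biUnion fun n _ => finite_setOf_monic_natDegree_eq n).subset fun P hP =>
    Set.mem_biUnion (show P.natDegree ∈ Set.Iic m from hP.2.2) ⟨hP.1, rfl⟩

/-- The monic irreducible polynomials of degree at most `m` over a finite field. -/
noncomputable def monicIrreducibles (F : Type*) [Field F] [Finite F] (m : ℕ) : Finset F[X] :=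
  (finite_setOf_monic_irreducible F m).toFinset

variable {m n : ℕ} {P : F[X]}

theorem mem_monicIrreducibles :
    P ∈ monicIrreducibles F m ↔ P.Monic ∧ Irreducible P ∧ P.natDegree ≤ m := by
  simp [monicIrreducibles]

theorem natDegree_mem_Icc (hP : P ∈ monicIrreducibles F m) : P.natDegree ∈ Icc 1 m :=
  have ⟨_, irr, deg⟩ := mem_monicIrreducibles.mp hP
  mem_Icc.mpr ⟨irr.natDegree_pos, deg⟩

theorem natDegree_ne_zero (hP : P ∈ monicIrreducibles F m) : P.natDegree ≠ 0 :=
  Nat.one_le_iff_ne_zero.mp (mem_Icc.mp (natDegree_mem_Icc hP)).1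

theorem monicsFactoringIn_monicIrreducibles_of_le (hn : n ≤ m) :
    monicsFactoringIn (monicIrreducibles F m) n = {f | f.Monic ∧ f.natDegree = n} :=
  Set.Subset.antisymm (fun _ hf => ⟨hf.1, hf.2.1⟩) fun _ ⟨monic, deg⟩ =>
    ⟨monic, deg, fun _ hp irr dvd => mem_monicIrreducibles.mpr
      ⟨hp, irr, (natDegree_le_of_dvd dvd monic.ne_zero).trans (deg.trans_le hn)⟩⟩

end FiniteField

section PolySeries

variable {F : Type*} [Field F] [Fintype F] {m n j : ℕ}

theorem ncard_setOf_monic_natDegree_eq (n : ℕ) :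
    {f : F[X] | f.Monic ∧ f.natDegree = n}.ncard = Fintype.card F ^ n := by
  rw [← Nat.card_coe_set_eq, Set.coe_ofPred, Nat.card_congr (monicEquivFun F n)]
  simp

/-- The generating function `∑ p_{n,m,q} Xⁿ = ∏ (1 - (X/q) ^ deg P)⁻¹` of the proportions of
`m`-friable polynomials; see `polyProb_eq_coeff`. -/
noncomputable def polySeries (F : Type*) [Field F] [Fintype F] (m : ℕ) : PowerSeries ℝ :=
  PowerSeries.rescale (Fintype.card F : ℝ)⁻¹ (∏ P ∈ monicIrreducibles F m, geometric P.natDegree)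

/-- The logarithmic derivative of `polySeries F m`. -/
noncomputable def primeSeries (F : Type*) [Field F] [Fintype F] (m : ℕ) : PowerSeries ℝ :=
  PowerSeries.rescale (Fintype.card F : ℝ)⁻¹
    (∑ P ∈ monicIrreducibles F m, PowerSeries.C (P.natDegree : ℝ) * (geometric P.natDegree - 1))

theorem coeff_polySeries (n : ℕ) : PowerSeries.coeff n (polySeries F m) =
    (monicsFactoringIn (monicIrreducibles F m) n).ncard / (Fintype.card F : ℝ) ^ n := by
  rw [polySeries, PowerSeries.coeff_rescale, coeff_prod_geometric, inv_pow, div_eq_inv_mul]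
  exact fun P hP => have ⟨monic, irr, _⟩ := mem_monicIrreducibles.mp hP; ⟨monic, irr⟩

theorem coeff_polySeries_of_le (hn : n ≤ m) : PowerSeries.coeff n (polySeries F m) = 1 := by
  rw [coeff_polySeries, monicsFactoringIn_monicIrreducibles_of_le hn,
    ncard_setOf_monic_natDegree_eq, Nat.cast_pow]
  exact div_self (by positivity)

theorem euler_polySeries (F : Type*) [Field F] [Fintype F] (m : ℕ) :
    euler ℝ (polySeries F m) = polySeries F m * primeSeries F m := by
  rw [polySeries, euler_rescale,
    euler_prod_of_eq fun P hP => euler_geometric (natDegree_ne_zero hP), map_mul, primeSeries]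

theorem coeff_primeSeries (hj : j ≠ 0) : PowerSeries.coeff j (primeSeries F m) =
    (∑ P ∈ monicIrreducibles F m, if P.natDegree ∣ j then (P.natDegree : ℝ) else 0) /
      (Fintype.card F : ℝ) ^ j := by
  rw [primeSeries, PowerSeries.coeff_rescale, map_sum, inv_pow, div_eq_inv_mul]
  congr 1
  refine sum_congr rfl fun P hP => ?_
  rw [PowerSeries.coeff_C_mul, map_sub, coeff_geometric (natDegree_ne_zero hP),
    PowerSeries.coeff_one, if_neg hj, sub_zero, mul_ite, mul_one, mul_zero]

theorem coeff_zero_primeSeries : PowerSeries.coeff 0 (primeSeries F m) = 0 := by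
  have := congrArg (PowerSeries.coeff 0) (euler_polySeries F m)
  rw [coeff_euler, PowerSeries.coeff_zero_eq_constantCoeff, map_mul,
    ← PowerSeries.coeff_zero_eq_constantCoeff_apply, coeff_polySeries_of_le m.zero_le] at this
  simpa using this.symm

theorem coeff_primeSeries_of_le (hj : j ≠ 0) (hjm : j ≤ m) :
    PowerSeries.coeff j (primeSeries F m) = 1 :=
  coeff_eq_one_of_euler_eq (euler_polySeries F m) (fun _ => coeff_polySeries_of_le) hj hjm

theorem mul_card_monicIrreducibles_le {d : ℕ} (hd : d ∈ Icc 1 m) :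
    d * (#{P ∈ monicIrreducibles F m | P.natDegree = d} : ℝ) ≤ (Fintype.card F : ℝ) ^ d := by
  obtain ⟨hd1, hdm⟩ := mem_Icc.mp hd
  have sum_eq := coeff_primeSeries_of_le (F := F) (by omega) hdm
  rw [coeff_primeSeries (by omega), div_eq_one_iff_eq (by positivity)] at sum_eq
  rw [← sum_eq, mul_comm, ← nsmul_eq_mul, ← sum_const, sum_filter]
  refine sum_le_sum fun P _ => ?_
  split_ifs with heq hdvd hdvd
  · rw [heq]
  · exact absurd heq.dvd hdvd
  · positivity
  · rfl

theorem sum_monicIrreducibles_le {f : ℕ → ℝ} (hf : ∀ d, 0 ≤ f d) (m : ℕ) :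
    ∑ P ∈ monicIrreducibles F m, f P.natDegree ≤
      ∑ d ∈ Icc 1 m, (Fintype.card F : ℝ) ^ d / d * f d := by
  rw [← sum_fiberwise_of_maps_to fun P hP => natDegree_mem_Icc hP]
  refine sum_le_sum fun d hd => ?_
  have hd1 : (0 : ℝ) < d := by exact_mod_cast (mem_Icc.mp hd).1
  rw [sum_congr rfl fun P hP => congrArg f (mem_filter.mp hP).2, sum_const, nsmul_eq_mul]
  exact mul_le_mul_of_nonneg_right
    ((le_div_iff₀' hd1).mpr (mul_card_monicIrreducibles_le hd)) (hf d)

theorem sum_Icc_pow_le {q : ℝ} (hq : 2 ≤ q) (n : ℕ) : ∑ d ∈ Icc 1 n, q ^ d ≤ 2 * q ^ n := by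
  induction n with
  | zero => simp
  | succ n ih =>
    rw [sum_Icc_succ_top (by omega), pow_succ]
    nlinarith [pow_pos (zero_lt_two.trans_le hq) n]

theorem two_le_card (F : Type*) [Field F] [Fintype F] : (2 : ℝ) ≤ Fintype.card F := by
  exact_mod_cast Fintype.one_lt_card (α := F)

theorem coeff_primeSeries_le (hj : m < j) : PowerSeries.coeff j (primeSeries F m) ≤
    2 * (Fintype.card F : ℝ) ^ (j / 2) / (Fintype.card F : ℝ) ^ j := by
  rw [coeff_primeSeries (by omega)]
  refine div_le_div_of_nonneg_right ?_ (by positivity)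
  calc ∑ P ∈ monicIrreducibles F m, (if P.natDegree ∣ j then (P.natDegree : ℝ) else 0)
      ≤ ∑ d ∈ Icc 1 m, (Fintype.card F : ℝ) ^ d / d * (if d ∣ j then (d : ℝ) else 0) :=
        sum_monicIrreducibles_le (f := fun d => if d ∣ j then (d : ℝ) else 0)
          (fun d => by positivity) m
    _ = ∑ d ∈ Icc 1 m with d ∣ j, (Fintype.card F : ℝ) ^ d := by
        rw [sum_filter]
        refine sum_congr rfl fun d hd => ?_
        have hd0 : (d : ℝ) ≠ 0 := Nat.cast_ne_zero.mpr (Nat.one_le_iff_ne_zero.mp (mem_Icc.mp hd).1)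
        rw [mul_ite, mul_zero, div_mul_cancel₀ _ hd0]
    _ ≤ ∑ d ∈ Icc 1 (j / 2), (Fintype.card F : ℝ) ^ d := by
        refine sum_le_sum_of_subset_of_nonneg (fun d hd => ?_) fun _ _ _ => by positivity
        rw [mem_filter, mem_Icc] at hd
        obtain ⟨⟨hd1, hdm⟩, k, rfl⟩ := hd
        have hk : 2 ≤ k := by
          by_contra! hk
          nlinarith
        exact mem_Icc.mpr ⟨hd1, (Nat.le_div_iff_mul_le two_pos).mpr (by gcongr)⟩
    _ ≤ 2 * (Fintype.card F : ℝ) ^ (j / 2) := sum_Icc_pow_le (two_le_card F) _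

theorem coeff_primeSeries_nonneg (j : ℕ) : 0 ≤ PowerSeries.coeff j (primeSeries F m) := by
  rcases eq_or_ne j 0 with rfl | hj
  · exact coeff_zero_primeSeries.ge
  · rw [coeff_primeSeries hj]
    positivity

end PolySeries

section PolyProb

variable {F : Type} [Field F] [Fintype F] {m n : ℕ}

theorem polyProb_eq_coeff (n m : ℕ) :
    polyProb F n m = PowerSeries.coeff n (polySeries F m) := by
  rw [coeff_polySeries, polyProb, ← Nat.card_coe_set_eq]
  congr 2
  refine Nat.card_congr (Equiv.subtypeEquivRight fun f => ?_)
  refine and_congr_right fun _ => and_congr_right fun _ => forall_congr' fun p =>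
    forall₃_congr fun hp irr _ => ?_
  simp [mem_monicIrreducibles, hp, irr]

theorem FqFun_eq_prod (m : ℕ) (x : ℝ) : FqFun F m x =
    ∏ P ∈ monicIrreducibles F m, (1 - (x / (Fintype.card F : ℝ)) ^ P.natDegree)⁻¹ :=
  finprod_mem_eq_finite_toFinset_prod _ (finite_setOf_monic_irreducible F m)

theorem sumsTo_polySeries (m : ℕ) {x : ℝ} (hx : 0 ≤ x) (hxq : x < Fintype.card F) :
    SumsTo (polySeries F m) x (FqFun F m x) := by
  have ratio_eq : (Fintype.card F : ℝ)⁻¹ * x = x / Fintype.card F := inv_mul_eq_div _ _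
  have hlt : x / Fintype.card F < 1 := (div_lt_one (hx.trans_lt hxq)).mpr hxq
  refine SumsTo.rescale _ ?_
  rw [FqFun_eq_prod, ratio_eq]
  exact SumsTo.prod fun P hP => sumsTo_geometric (natDegree_ne_zero hP) (by positivity) hlt

end PolyProb

end FriablePolynomials

/-! ### The quotient of the two generating functions -/

section Quotient

open PowerSeries

section PermRecurrence

theorem euler_prod_expMonomial_div (c : ℝ) (m : ℕ) :
    euler ℝ (∏ i ∈ Icc 1 m, expMonomial (c / i) i) =
      (∏ i ∈ Icc 1 m, expMonomial (c / i) i) * ∑ i ∈ Icc 1 m, C c * X ^ i := by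
  refine euler_prod_of_eq fun i hi => ?_
  have hi0 : i ≠ 0 := Nat.one_le_iff_ne_zero.mp (mem_Icc.mp hi).1
  rw [euler_expMonomial hi0, div_mul_cancel₀ c (Nat.cast_ne_zero.mpr hi0)]

theorem euler_permSeries (m : ℕ) :
    euler ℝ (permSeries m) = permSeries m * ∑ i ∈ Icc 1 m, X ^ i := by
  simpa [permSeries] using euler_prod_expMonomial_div 1 m

theorem coeff_zero_permSeries (m : ℕ) : coeff 0 (permSeries m) = 1 := by
  rw [coeff_zero_eq_constantCoeff, permSeries, map_prod]
  refine prod_eq_one fun i hi => ?_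
  simpa using coeff_expMonomial_mul (Nat.one_le_iff_ne_zero.mp (mem_Icc.mp hi).1) (1 / i) 0

theorem isFriableSequence_coeff_permSeries {m : ℕ} (hm : 1 ≤ m) :
    IsFriableSequence m fun n => coeff n (permSeries m) where
  one_le := hm
  map_zero := coeff_zero_permSeries m
  mul_eq_sum n := by
    rw [← coeff_euler, euler_permSeries, mul_sum, map_sum]
    exact sum_congr rfl fun i _ => coeff_mul_X_pow' _ _ _

end PermRecurrence

section LogDerivative

variable {G L : ℝ⟦X⟧} {m : ℕ}

theorem mul_coeff_eq_sum_of_euler_eq (h : euler ℝ G = G * L) (hL : coeff 0 L = 0) (n : ℕ) :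
    n * coeff n G = ∑ i ∈ range n, coeff i G * coeff (n - i) L := by
  rw [← coeff_euler, h, coeff_mul, Nat.sum_antidiagonal_eq_sum_range_succ_mk, sum_range_succ]
  simp [hL]

theorem coeff_nonneg_of_euler_eq (h : euler ℝ G = G * L) (hG : 0 ≤ coeff 0 G)
    (hL0 : coeff 0 L = 0) (hL : ∀ j, 0 ≤ coeff j L) (n : ℕ) : 0 ≤ coeff n G := by
  induction n using Nat.strong_induction_on with
  | _ n ih =>
    rcases Nat.eq_zero_or_pos n with rfl | hn
    · exact hG
    have mul_nonneg : 0 ≤ n * coeff n G := by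
      rw [mul_coeff_eq_sum_of_euler_eq h hL0]
      exact sum_nonneg fun i hi => mul_nonneg (ih i (mem_range.mp hi)) (hL _)
    exact nonneg_of_mul_nonneg_right mul_nonneg (Nat.cast_pos.mpr hn)

theorem coeff_eq_zero_of_euler_eq (h : euler ℝ G = G * L) (hL : ∀ j ≤ m, coeff j L = 0) {n : ℕ}
    (hn : n ≠ 0) (hnm : n ≤ m) : coeff n G = 0 := by
  have sum_eq_zero : n * coeff n G = 0 := by
    rw [mul_coeff_eq_sum_of_euler_eq h (hL 0 m.zero_le)]
    exact sum_eq_zero fun i _ => by rw [hL _ (by omega), mul_zero]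
  exact (mul_eq_zero.mp sum_eq_zero).resolve_left (Nat.cast_ne_zero.mpr hn)

theorem sumsTo_euler_euler_of_euler_eq (h : euler ℝ G = G * L) {x s a b : ℝ} (hG : SumsTo G x s)
    (hL : SumsTo L x a) (hL' : SumsTo (euler ℝ L) x b) :
    SumsTo (euler ℝ (euler ℝ G)) x (s * (a ^ 2 + b)) := by
  have euler_euler : euler ℝ (euler ℝ G) = G * (L * L + euler ℝ L) := by
    rw [h, Derivation.leibniz, h]
    simp only [smul_eq_mul]
    ring
  rw [euler_euler, pow_two]
  exact hG.mul ((hL.mul hL).add hL')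

end LogDerivative

section Convolution

theorem hasSum_coeff_mul (G A : ℝ⟦X⟧) (n : ℕ) :
    HasSum (fun k => coeff k G * if k ≤ n then coeff (n - k) A else 0) (coeff n (G * A)) := by
  have sum_eq : coeff n (G * A) =
      ∑ k ∈ range (n + 1), coeff k G * if k ≤ n then coeff (n - k) A else 0 := by
    rw [coeff_mul, Nat.sum_antidiagonal_eq_sum_range_succ_mk]
    exact sum_congr rfl fun k hk => by rw [if_pos (mem_range_succ_iff.mp hk)]
  rw [sum_eq]
  refine hasSum_sum_of_ne_finset_zero fun k hk => ?_
  rw [if_neg (mt mem_range_succ_iff.mpr hk), mul_zero]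

theorem abs_coeff_mul_div_sub_le {A G : ℝ⟦X⟧} {n m : ℕ} {x s v : ℝ}
    (hA : IsFriableSequence m fun n => coeff n A) (hx : 1 ≤ x) (hmn : m ≤ n)
    (hxn : geomSum m x = n) (hG : ∀ k, 0 ≤ coeff k G)
    (hG0 : ∀ k, k ≠ 0 → k ≤ m → coeff k G = 0) (hs : SumsTo G x s)
    (hv : SumsTo (euler ℝ (euler ℝ G)) x v) :
    |coeff n (G * A) / coeff n A - s| ≤ (2 * Real.exp 2 + 4) / (n * m) * v := by
  have hP : 0 < coeff n A := hA.pos n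
  set c : ℝ := (2 * Real.exp 2 + 4) / (n * m)
  have difference : HasSum (fun k => coeff k G * ((if k ≤ n then coeff (n - k) A else 0) -
      x ^ k * coeff n A)) (coeff n (G * A) - s * coeff n A) := by
    refine ((hasSum_coeff_mul G A n).sub (HasSum.mul_right (coeff n A) hs)).congr_fun fun k => ?_
    rw [mul_sub, mul_assoc]
  have termwise (k : ℕ) : ‖coeff k G * ((if k ≤ n then coeff (n - k) A else 0) -
      x ^ k * coeff n A)‖ ≤ c * coeff n A * (coeff k (euler ℝ (euler ℝ G)) * x ^ k) := by
    rw [norm_mul, Real.norm_of_nonneg (hG k), Real.norm_eq_abs, coeff_euler, coeff_euler]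
    by_cases hmk : m ≤ k
    · refine (mul_le_mul_of_nonneg_left
        (hA.abs_sub_saddle_pow_mul_le hx hmn hxn hmk) (hG k)).trans_eq ?_
      ring
    · rcases eq_or_ne k 0 with rfl | hk
      · simp
      · simp [hG0 k hk (by omega)]
  have bound : |coeff n (G * A) - s * coeff n A| ≤ c * coeff n A * v := by
    rw [← difference.tsum_eq]
    exact tsum_of_norm_bounded (HasSum.mul_left (c * coeff n A) hv) termwise
  rw [div_sub' hP.ne', abs_div, abs_of_pos hP, div_le_iff₀ hP, mul_comm (coeff n A) s]
  linarith

end Convolution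

section CorrectionSeries

/-- The generating function `∑ p_{n,m,q} Xⁿ` divided by `∑ p_{n,m} Xⁿ`, whose sum is `G_q`. -/
noncomputable def correctionSeries (F : Type*) [Field F] [Fintype F] (m : ℕ) : ℝ⟦X⟧ :=
  polySeries F m * ∏ i ∈ Icc 1 m, expMonomial (-1 / i) i

/-- The logarithmic derivative of `correctionSeries F m`. -/
noncomputable def tailSeries (F : Type*) [Field F] [Fintype F] (m : ℕ) : ℝ⟦X⟧ :=
  primeSeries F m - ∑ i ∈ Icc 1 m, X ^ i

section

variable (F : Type*) [Field F] [Fintype F] (m : ℕ)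

theorem correctionSeries_mul_permSeries : correctionSeries F m * permSeries m = polySeries F m := by
  rw [correctionSeries, permSeries, mul_assoc, ← prod_mul_distrib, prod_eq_one, mul_one]
  intro i hi
  rw [mul_comm, neg_div]
  exact expMonomial_mul_expMonomial_neg (Nat.one_le_iff_ne_zero.mp (mem_Icc.mp hi).1) _

theorem euler_correctionSeries :
    euler ℝ (correctionSeries F m) = correctionSeries F m * tailSeries F m := by
  have := euler_mul_of_eq (euler_polySeries F m) (euler_prod_expMonomial_div (-1) m)
  simpa [correctionSeries, tailSeries, sub_eq_add_neg] using this

theorem coeff_zero_correctionSeries : coeff 0 (correctionSeries F m) = 1 := by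
  have coeff_eq := congrArg (coeff 0) (correctionSeries_mul_permSeries F m)
  rwa [coeff_mul, Nat.antidiagonal_zero, sum_singleton, coeff_zero_permSeries, mul_one,
    coeff_polySeries_of_le m.zero_le] at coeff_eq

variable {m} {j : ℕ}

theorem coeff_tailSeries_of_le (hj : j ≤ m) : coeff j (tailSeries F m) = 0 := by
  rw [tailSeries, map_sub, map_sum]
  simp only [coeff_X_pow, sum_ite_eq, mem_Icc]
  rcases eq_or_ne j 0 with rfl | hj0
  · simp [coeff_zero_primeSeries]
  · rw [coeff_primeSeries_of_le hj0 hj, if_pos ⟨by omega, hj⟩, sub_self]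

theorem coeff_tailSeries_of_lt (hj : m < j) :
    coeff j (tailSeries F m) = coeff j (primeSeries F m) := by
  rw [tailSeries, map_sub, map_sum]
  simp only [coeff_X_pow, sum_ite_eq, mem_Icc]
  rw [if_neg (by omega), sub_zero]

theorem coeff_tailSeries_nonneg (m j : ℕ) : 0 ≤ coeff j (tailSeries F m) := by
  rcases le_or_gt j m with hj | hj
  · exact (coeff_tailSeries_of_le F hj).ge
  · exact (coeff_tailSeries_of_lt F hj).symm ▸ coeff_primeSeries_nonneg j

end

variable {F : Type} [Field F] [Fintype F] {n m : ℕ} {x a b : ℝ}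

theorem sumsTo_correctionSeries (m : ℕ) (hx : 0 ≤ x) (hxq : x < Fintype.card F) :
    SumsTo (correctionSeries F m) x (Gq F m x) := by
  have exp_neg_sum : Real.exp (-∑ i ∈ Icc 1 m, x ^ i / (i : ℝ)) =
      ∏ i ∈ Icc 1 m, Real.exp (-1 / i * x ^ i) := by
    rw [← sum_neg_distrib, Real.exp_sum]
    exact prod_congr rfl fun i _ => by ring_nf
  rw [Gq, exp_neg_sum]
  exact (sumsTo_polySeries m hx hxq).mul <| SumsTo.prod fun i hi =>
    sumsTo_expMonomial (Nat.one_le_iff_ne_zero.mp (mem_Icc.mp hi).1) _ _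

theorem abs_polyProb_div_permProb_sub_Gq_le (hm : 1 ≤ m) (hmn : m ≤ n) (hx : 1 ≤ x)
    (hxq : x < Fintype.card F) (hxn : geomSum m x = n) (ha : SumsTo (tailSeries F m) x a)
    (hb : SumsTo (euler ℝ (tailSeries F m)) x b) :
    |polyProb F n m / permProb n m - Gq F m x| ≤
      (2 * Real.exp 2 + 4) / (n * m) * (Gq F m x * (a ^ 2 + b)) := by
  have logDeriv := euler_correctionSeries F m
  have hs := sumsTo_correctionSeries (F := F) m (zero_le_one.trans hx) hxq
  rw [polyProb_eq_coeff, permProb_eq_coeff n hm, ← correctionSeries_mul_permSeries]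
  exact abs_coeff_mul_div_sub_le (isFriableSequence_coeff_permSeries hm) hx hmn hxn
    (coeff_nonneg_of_euler_eq logDeriv (by rw [coeff_zero_correctionSeries]; exact zero_le_one)
      (coeff_tailSeries_of_le F m.zero_le) (coeff_tailSeries_nonneg F m))
    (fun k => coeff_eq_zero_of_euler_eq logDeriv fun _ => coeff_tailSeries_of_le F)
    hs (sumsTo_euler_euler_of_euler_eq logDeriv hs ha hb)

end CorrectionSeries

end Quotient

/-! ### Explicit error bounds -/

section ErrorBounds

open PowerSeries

section TailSum

variable {r : ℝ}

/-- The sum of the common majorant of the coefficients of `tailSeries` and of its Euler derivative,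
after normalization; the exponent is the integer quotient `⌊t/2⌋`. -/
noncomputable def tailConst (r : ℝ) : ℝ := ∑' t : ℕ, (1 + t) * r ^ (t / 2)

theorem summable_one_add_mul_pow_half (hr0 : 0 < r) (hr1 : r < 1) :
    Summable fun t : ℕ => (1 + t) * r ^ (t / 2) := by
  set s := √r
  have hs0 : 0 < s := Real.sqrt_pos.mpr hr0
  have hs1 : s < 1 := (Real.sqrt_lt_sqrt hr0.le hr1).trans_eq Real.sqrt_one
  have pow_half_le (t : ℕ) : r ^ (t / 2) ≤ s⁻¹ * s ^ t := by
    rw [inv_mul_eq_div, le_div_iff₀ hs0, ← Real.sq_sqrt hr0.le, ← pow_mul, ← pow_succ]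
    exact pow_le_pow_of_le_one hs0.le hs1.le (by omega)
  have summable_pow := summable_geometric_of_lt_one hs0.le hs1
  have summable_mul_pow := summable_pow_mul_geometric_of_norm_lt_one 1
    ((Real.norm_of_nonneg hs0.le).trans_lt hs1)
  refine .of_nonneg_of_le (fun t => by positivity) (fun t => ?_)
    ((summable_pow.add summable_mul_pow).mul_left s⁻¹)
  calc (1 + t) * r ^ (t / 2) ≤ (1 + t) * (s⁻¹ * s ^ t) := by gcongr; exact pow_half_le t
    _ = _ := by ring

theorem tailConst_pos (hr0 : 0 < r) (hr1 : r < 1) : 0 < tailConst r :=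
  (summable_one_add_mul_pow_half hr0 hr1).tsum_pos (fun t => by positivity) 0 (by simp)

theorem exists_sumsTo_le_mul_tailConst {A : ℝ⟦X⟧} {m : ℕ} {x c : ℝ} (hr0 : 0 < r) (hr1 : r < 1)
    (hx : 0 ≤ x) (hA : ∀ j, 0 ≤ coeff j A) (hAm : ∀ j ≤ m, coeff j A = 0)
    (hAc : ∀ t : ℕ, coeff (t + (m + 1)) A * x ^ (t + (m + 1)) ≤ c * ((1 + t) * r ^ (t / 2))) :
    ∃ s, SumsTo A x s ∧ 0 ≤ s ∧ s ≤ c * tailConst r := by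
  have term_nonneg (j : ℕ) : 0 ≤ coeff j A * x ^ j := mul_nonneg (hA j) (pow_nonneg hx j)
  have summable_majorant := (summable_one_add_mul_pow_half hr0 hr1).mul_left c
  have summable_tail : Summable fun t => coeff (t + (m + 1)) A * x ^ (t + (m + 1)) :=
    .of_nonneg_of_le (fun t => term_nonneg _) hAc summable_majorant
  have summable_all := (summable_nat_add_iff (f := fun j => coeff j A * x ^ j) (m + 1)).mp
    summable_tail
  refine ⟨_, summable_all.hasSum, tsum_nonneg term_nonneg, ?_⟩
  have head_eq_zero : ∑ j ∈ range (m + 1), coeff j A * x ^ j = 0 :=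
    sum_eq_zero fun j hj => by rw [hAm j (mem_range_succ_iff.mp hj), zero_mul]
  rw [← summable_all.sum_add_tsum_nat_add (m + 1), head_eq_zero, zero_add, tailConst,
    ← tsum_mul_left]
  exact summable_tail.tsum_le_tsum hAc summable_majorant

end TailSum

section TailSeries

variable {F : Type*} [Field F] [Fintype F] {x r : ℝ}

theorem coeff_tailSeries_mul_pow_le (m t : ℕ) (hx : 1 ≤ x) (hr1 : r < 1)
    (hxr : x ^ 2 / Fintype.card F ≤ r) :
    coeff (t + (m + 1)) (tailSeries F m) * x ^ (t + (m + 1)) ≤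
      2 * (x ^ 2 / Fintype.card F) ^ ((m + 2) / 2) * r ^ (t / 2) := by
  rw [coeff_tailSeries_of_lt F (by omega)]
  have coeff_le := coeff_primeSeries_le (F := F) (show m < t + (m + 1) by omega)
  have hq := two_le_card F
  set q : ℝ := (Fintype.card F : ℝ)
  set j := t + (m + 1)
  have pow_split : q ^ j = q ^ (j / 2) * q ^ ((j + 1) / 2) := by
    rw [← pow_add]
    congr 1
    omega
  have pow_le : x ^ j ≤ (x ^ 2) ^ ((j + 1) / 2) := by
    rw [← pow_mul]
    exact pow_le_pow_right₀ hx (by omega)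
  have ratio_nonneg : 0 ≤ x ^ 2 / q := by positivity
  calc coeff j (primeSeries F m) * x ^ j
      ≤ 2 * q ^ (j / 2) / q ^ j * (x ^ 2) ^ ((j + 1) / 2) := by gcongr
    _ = 2 * (x ^ 2 / q) ^ ((j + 1) / 2) := by
        rw [pow_split, div_pow]
        field_simp
    _ ≤ 2 * (x ^ 2 / q) ^ ((m + 2) / 2 + t / 2) := by
        gcongr 2 * ?_
        exact pow_le_pow_of_le_one ratio_nonneg (hxr.trans hr1.le) (by omega)
    _ = 2 * (x ^ 2 / q) ^ ((m + 2) / 2) * (x ^ 2 / q) ^ (t / 2) := by rw [pow_add, mul_assoc]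
    _ ≤ _ := by gcongr

theorem exists_sumsTo_tailSeries (m : ℕ) (hx : 1 ≤ x) (hr1 : r < 1)
    (hxr : x ^ 2 / Fintype.card F ≤ r) :
    ∃ a, SumsTo (tailSeries F m) x a ∧ 0 ≤ a ∧
      a ≤ 2 * (x ^ 2 / Fintype.card F) ^ ((m + 2) / 2) * tailConst r := by
  have hr0 : 0 < r := lt_of_lt_of_le (by positivity) hxr
  refine exists_sumsTo_le_mul_tailConst hr0 hr1 (zero_le_one.trans hx) (coeff_tailSeries_nonneg F m)
    (fun j => coeff_tailSeries_of_le F) fun t =>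
      (coeff_tailSeries_mul_pow_le m t hx hr1 hxr).trans ?_
  gcongr
  exact le_mul_of_one_le_left (by positivity) (by linarith [t.cast_nonneg (α := ℝ)])

theorem exists_sumsTo_euler_tailSeries {m : ℕ} (hm : 1 ≤ m) (hx : 1 ≤ x) (hr1 : r < 1)
    (hxr : x ^ 2 / Fintype.card F ≤ r) :
    ∃ b, SumsTo (euler ℝ (tailSeries F m)) x b ∧
      b ≤ 4 * m * (x ^ 2 / Fintype.card F) ^ ((m + 2) / 2) * tailConst r := by
  have hr0 : 0 < r := lt_of_lt_of_le (by positivity) hxr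
  obtain ⟨b, hb, -, hb_le⟩ := exists_sumsTo_le_mul_tailConst
    (A := euler ℝ (tailSeries F m)) (m := m)
    (c := 4 * m * (x ^ 2 / Fintype.card F) ^ ((m + 2) / 2)) hr0 hr1 (zero_le_one.trans hx)
    (fun j => by
      rw [coeff_euler]
      exact mul_nonneg j.cast_nonneg (coeff_tailSeries_nonneg F m j))
    (fun j hj => by rw [coeff_euler, coeff_tailSeries_of_le F hj, mul_zero])
    fun t => by
      have index_le : ((t + (m + 1) : ℕ) : ℝ) ≤ 2 * m * (1 + t) := by
        have hm' : (1 : ℝ) ≤ m := Nat.one_le_cast.mpr hm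
        push_cast
        nlinarith [t.cast_nonneg (α := ℝ)]
      rw [coeff_euler, mul_assoc]
      refine (mul_le_mul index_le (coeff_tailSeries_mul_pow_le m t hx hr1 hxr)
        (mul_nonneg (coeff_tailSeries_nonneg F m _) (by positivity)) (by positivity)).trans_eq ?_
      ring
  exact ⟨b, hb, hb_le⟩

end TailSeries

section GBound

theorem inv_one_sub_le_exp {r t : ℝ} (htr : t ≤ r) (hr1 : r < 1) :
    (1 - t)⁻¹ ≤ Real.exp (t + 1 / (1 - r) * t ^ 2) := by
  have ht1 : 0 < 1 - t := by linarith
  have : 0 < 1 - r := by linarith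
  calc (1 - t)⁻¹ = 1 / (1 - t) * t ^ 2 + t + 1 := by
        field_simp
        ring
    _ ≤ 1 / (1 - r) * t ^ 2 + t + 1 := by gcongr
    _ ≤ _ := by
        rw [add_comm t]
        exact Real.add_one_le_exp _

theorem eulerFactor_exponent_le {q x r : ℝ} {d : ℕ} (hq : 0 < q) (hr1 : r < 1)
    (hxr : x ^ 2 / q ≤ r) (hd : d ≠ 0) :
    q ^ d / d * ((x / q) ^ d + 1 / (1 - r) * ((x / q) ^ d) ^ 2) ≤
      x ^ d / d + 1 / (1 - r) * r ^ d := by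
  have : 0 < 1 - r := sub_pos.mpr hr1
  have square_term_le : q ^ d / d * ((x / q) ^ d) ^ 2 ≤ r ^ d := by
    calc q ^ d / d * ((x / q) ^ d) ^ 2 = (x ^ 2 / q) ^ d / d := by
          simp only [div_pow]
          field_simp
          ring
      _ ≤ (x ^ 2 / q) ^ d :=
          div_le_self (by positivity) (Nat.one_le_cast.mpr (Nat.one_le_iff_ne_zero.mpr hd))
      _ ≤ r ^ d := by gcongr
  calc q ^ d / d * ((x / q) ^ d + 1 / (1 - r) * ((x / q) ^ d) ^ 2)
      = x ^ d / d + 1 / (1 - r) * (q ^ d / d * ((x / q) ^ d) ^ 2) := by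
        simp only [div_pow]
        field_simp
    _ ≤ _ := by gcongr

variable {F : Type} [Field F] [Fintype F] {x r : ℝ}

theorem Gq_nonneg (m : ℕ) (hx : 0 ≤ x) (hxq : x ≤ Fintype.card F) : 0 ≤ Gq F m x := by
  rw [Gq, FqFun_eq_prod]
  refine mul_nonneg (prod_nonneg fun P _ => inv_nonneg.mpr (sub_nonneg.mpr ?_)) (exp_pos _).le
  exact pow_le_one₀ (by positivity) (div_le_one_of_le₀ hxq (Nat.cast_nonneg _))

theorem FqFun_le (m : ℕ) (hx : 1 ≤ x) (hr1 : r < 1) (hxr : x ^ 2 / Fintype.card F ≤ r) :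
    FqFun F m x ≤ Real.exp (∑ i ∈ Icc 1 m, (x ^ i / i + 1 / (1 - r) * r ^ i)) := by
  have hq := two_le_card F
  rw [FqFun_eq_prod]
  have sum_le := sum_monicIrreducibles_le (F := F) (f := fun d =>
    (x / Fintype.card F) ^ d + 1 / (1 - r) * ((x / Fintype.card F) ^ d) ^ 2)
    (fun d => by have := sub_pos.mpr hr1; positivity) m
  set q : ℝ := (Fintype.card F : ℝ)
  have : 0 < 1 - r := sub_pos.mpr hr1
  have ratio_le : x / q ≤ r := by
    refine le_trans ?_ hxr
    gcongr
    exact le_self_pow₀ hx two_ne_zero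
  have ratio_pow_le (P) (hP : P ∈ monicIrreducibles F m) : (x / q) ^ P.natDegree ≤ r :=
    (pow_le_of_le_one (by positivity) (ratio_le.trans hr1.le) (natDegree_ne_zero hP)).trans ratio_le
  calc ∏ P ∈ monicIrreducibles F m, (1 - (x / q) ^ P.natDegree)⁻¹
      ≤ ∏ P ∈ monicIrreducibles F m,
          Real.exp ((x / q) ^ P.natDegree + 1 / (1 - r) * ((x / q) ^ P.natDegree) ^ 2) :=
        prod_le_prod (fun P hP => inv_nonneg.mpr (by linarith [ratio_pow_le P hP]))
          fun P hP => inv_one_sub_le_exp (ratio_pow_le P hP) hr1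
    _ ≤ _ := by
        rw [← Real.exp_sum]
        refine Real.exp_le_exp.mpr (sum_le.trans (sum_le_sum fun d hd => ?_))
        exact eulerFactor_exponent_le (by positivity) hr1 hxr
          (Nat.one_le_iff_ne_zero.mp (mem_Icc.mp hd).1)

theorem Gq_le (m : ℕ) (hx : 1 ≤ x) (hr1 : r < 1) (hxr : x ^ 2 / Fintype.card F ≤ r) :
    Gq F m x ≤ Real.exp ((1 / (1 - r)) ^ 2) := by
  have hr0 : 0 ≤ r := le_trans (by positivity) hxr
  have : 0 < 1 - r := sub_pos.mpr hr1
  have geometric_le : ∑ i ∈ Icc 1 m, r ^ i ≤ 1 / (1 - r) := by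
    rw [one_div, ← tsum_geometric_of_lt_one hr0 hr1]
    exact (summable_geometric_of_lt_one hr0 hr1).sum_le_tsum _ fun i _ => by positivity
  calc Gq F m x ≤ Real.exp (∑ i ∈ Icc 1 m, (x ^ i / i + 1 / (1 - r) * r ^ i)) *
          Real.exp (-∑ i ∈ Icc 1 m, x ^ i / i) := by
        rw [Gq]
        gcongr
        exact FqFun_le m hx hr1 hxr
    _ = Real.exp (1 / (1 - r) * ∑ i ∈ Icc 1 m, r ^ i) := by
        rw [← Real.exp_add, sum_add_distrib, mul_sum, add_neg_cancel_comm]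
    _ ≤ _ := by
        rw [pow_two]
        gcongr

end GBound

section ErrorBound

/-- The implied constant in `|p_{n,m,q} / p_{n,m} - G_q(x)| ≪ (x² / q) ^ ⌈(m+1)/2⌉ / n` for
`x² / q ≤ r`, where `⌈(m+1)/2⌉` is the integer quotient `(m + 2) / 2`. -/
noncomputable def errorConst (r : ℝ) : ℝ :=
  (2 * Real.exp 2 + 4) * Real.exp ((1 / (1 - r)) ^ 2) * (4 * tailConst r ^ 2 + 4 * tailConst r)

theorem errorConst_pos {r : ℝ} (hr0 : 0 < r) (hr1 : r < 1) : 0 < errorConst r := by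
  have := tailConst_pos hr0 hr1
  rw [errorConst]
  positivity

theorem abs_polyProb_div_permProb_sub_Gq_le_errorConst {F : Type} [Field F] [Fintype F] {n m : ℕ}
    {x r : ℝ} (hm : 1 ≤ m) (hmn : m ≤ n) (hx : 1 ≤ x) (hxn : geomSum m x = n) (hr1 : r < 1)
    (hxr : x ^ 2 / Fintype.card F ≤ r) :
    |polyProb F n m / permProb n m - Gq F m x| ≤
      errorConst r * ((x ^ 2 / Fintype.card F) ^ ((m + 2) / 2) / n) := by
  have hq := two_le_card F
  have hxq : x < Fintype.card F := by
    have := (div_lt_one (by positivity)).mp (hxr.trans_lt hr1)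
    nlinarith
  obtain ⟨a, ha, ha0, ha_le⟩ := exists_sumsTo_tailSeries m hx hr1 hxr
  obtain ⟨b, hb, hb_le⟩ := exists_sumsTo_euler_tailSeries hm hx hr1 hxr
  have G_nonneg := Gq_nonneg m (zero_le_one.trans hx) hxq.le
  have G_le := Gq_le m hx hr1 hxr
  refine (abs_polyProb_div_permProb_sub_Gq_le hm hmn hx hxq hxn ha hb).trans ?_
  have hw : (x ^ 2 / Fintype.card F) ^ ((m + 2) / 2) ≤ (1 : ℝ) :=
    pow_le_one₀ (by positivity) (hxr.trans hr1.le)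
  set w : ℝ := (x ^ 2 / Fintype.card F) ^ ((m + 2) / 2)
  have : 0 ≤ w := by positivity
  have hm' : (1 : ℝ) ≤ m := Nat.one_le_cast.mpr hm
  have hn : (1 : ℝ) ≤ n := hm'.trans (Nat.cast_le.mpr hmn)
  have hK : 0 < tailConst r := tailConst_pos (lt_of_lt_of_le (by positivity) hxr) hr1
  rw [errorConst]
  set K := tailConst r
  have second_moment_le : a ^ 2 + b ≤ m * w * (4 * K ^ 2 + 4 * K) := by
    calc a ^ 2 + b ≤ (2 * w * K) ^ 2 + 4 * m * w * K := by gcongr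
      _ = w * w * (4 * K ^ 2) + m * w * (4 * K) := by ring
      _ ≤ m * w * (4 * K ^ 2) + m * w * (4 * K) := by
          gcongr
          exact hw.trans hm'
      _ = _ := by ring
  have G_mul_le : Gq F m x * (a ^ 2 + b) ≤
      Real.exp ((1 / (1 - r)) ^ 2) * (m * w * (4 * K ^ 2 + 4 * K)) :=
    (mul_le_mul_of_nonneg_left second_moment_le G_nonneg).trans
      (mul_le_mul_of_nonneg_right G_le (by positivity))
  calc (2 * Real.exp 2 + 4) / (n * m) * (Gq F m x * (a ^ 2 + b))
      ≤ (2 * Real.exp 2 + 4) / (n * m) *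
          (Real.exp ((1 / (1 - r)) ^ 2) * (m * w * (4 * K ^ 2 + 4 * K))) := by gcongr
    _ = _ := by field_simp

end ErrorBound

end ErrorBounds

/-! ### Size of the saddle point -/

section SaddlePoint

variable {m : ℕ} {x : ℝ}

theorem geomSum_mul_sub_one (m : ℕ) (x : ℝ) : geomSum m x * (x - 1) = x * (x ^ m - 1) := by
  rw [geomSum, ← Ico_add_one_right_eq_Icc, geom_sum_Ico_mul x (by omega)]
  ring

theorem pow_le_geomSum (hm : 1 ≤ m) (hx : 0 ≤ x) : x ^ m ≤ geomSum m x :=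
  single_le_sum (f := (x ^ ·)) (fun i _ => pow_nonneg hx i) (right_mem_Icc.mpr hm)

theorem one_le_of_le_geomSum (hm : 1 ≤ m) (hx : 0 ≤ x) (hmx : m ≤ geomSum m x) : 1 ≤ x := by
  by_contra! hx1
  have geomSum_lt := geomSum_lt_geomSum hm hx hx1
  have geomSum_one : geomSum m 1 = m := by simp [geomSum]
  linarith

theorem pow_sub_one_le_mul_log (m : ℕ) (hx : 0 < x) :
    x ^ m - 1 ≤ geomSum m x * Real.log x := by
  have sub_one_le : x - 1 ≤ x * Real.log x := by
    have := mul_le_mul_of_nonneg_left (Real.one_sub_inv_le_log_of_pos hx) hx.le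
    rwa [mul_sub, mul_inv_cancel₀ hx.ne', mul_one] at this
  refine le_of_mul_le_mul_left ?_ hx
  calc x * (x ^ m - 1) = geomSum m x * (x - 1) := (geomSum_mul_sub_one m x).symm
    _ ≤ geomSum m x * (x * Real.log x) := by
        gcongr
        exact sum_nonneg fun i _ => pow_nonneg hx.le i
    _ = _ := by ring

theorem log_le_four_mul_log_add_one {u y : ℝ} (hu : 0 ≤ u) (hy : 1 ≤ y)
    (h : y - 1 ≤ u * Real.log y) : Real.log y ≤ 4 * Real.log (u + 1) := by
  rcases hy.eq_or_lt with rfl | hy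
  · rw [Real.log_one]
    exact mul_nonneg zero_le_four (Real.log_nonneg (by linarith))
  obtain ⟨s, hs, rfl⟩ : ∃ s, 1 < s ∧ s ^ 2 = y :=
    ⟨√y, Real.lt_sqrt_of_sq_lt (by linarith), Real.sq_sqrt (by linarith)⟩
  rw [Real.log_pow, Nat.cast_ofNat] at h ⊢
  have add_one_le : s + 1 ≤ 2 * u := by
    have := mul_le_mul_of_nonneg_left (Real.log_le_sub_one_of_pos (by linarith : 0 < s)) hu
    exact le_of_mul_le_mul_right (by linarith : (s + 1) * (s - 1) ≤ 2 * u * (s - 1)) (by linarith)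
  have log_le : Real.log s ≤ Real.log ((u + 1) ^ 2) := Real.log_le_log (by linarith) (by nlinarith)
  rw [Real.log_pow, Nat.cast_ofNat] at log_le
  linarith

theorem saddle_pow_le {n : ℕ} (hm : 1 ≤ m) (hmn : m ≤ n) (hx : 1 ≤ x) (hxn : geomSum m x = n) :
    x ^ m ≤ 6 * (n / m) * min (m : ℝ) (Real.log (n / m + 1)) := by
  have hm0 : (0 : ℝ) < m := by positivity
  set u : ℝ := n / m
  have hnu : u * m = n := div_mul_cancel₀ _ hm0.ne'
  have hu1 : 1 ≤ u := (one_le_div hm0).mpr (Nat.cast_le.mpr hmn)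
  have sub_one_le : x ^ m - 1 ≤ u * Real.log (x ^ m) := by
    rw [Real.log_pow, ← mul_assoc, hnu, ← hxn]
    exact pow_sub_one_le_mul_log m (by linarith)
  have log_pow_le :=
    log_le_four_mul_log_add_one (zero_le_one.trans hu1) (one_le_pow₀ hx) sub_one_le
  have half_le_log : 1 / 2 ≤ Real.log (u + 1) := by
    have := Real.log_le_log two_pos (by linarith : 2 ≤ u + 1)
    linarith [Real.log_two_gt_d9]
  rcases min_choice (m : ℝ) (Real.log (u + 1)) with h | h <;> rw [h]
  · linarith [hxn ▸ pow_le_geomSum hm (zero_le_one.trans hx), hnu, mul_assoc 6 u m]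
  · have := mul_le_mul_of_nonneg_left log_pow_le (zero_le_one.trans hu1)
    nlinarith

theorem saddle_sq_div_pow_le {n : ℕ} {q : ℝ} (hm : 1 ≤ m) (hmn : m ≤ n) (hx : 1 ≤ x)
    (hxn : geomSum m x = n) (hq : 0 < q) :
    (x ^ 2 / q) ^ ((m + 2) / 2) / n ≤
      6 * ((n : ℝ) ^ ((1 + (if Even m then (1 : ℝ) else 0)) / (m : ℝ)) *
        min (m : ℝ) (Real.log (n / m + 1)) / (m * q ^ ((m + 2) / 2))) := by
  have hm0 : (0 : ℝ) < m := by positivity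
  have hn0 : (0 : ℝ) < n := hm0.trans_le (Nat.cast_le.mpr hmn)
  obtain ⟨a, cast_a, two_mul_half⟩ : ∃ a : ℕ, 1 + (if Even m then (1 : ℝ) else 0) = a ∧
      2 * ((m + 2) / 2) = m + a := by
    rcases Nat.even_or_odd m with h | h
    · exact ⟨2, by norm_num [h], by rw [Nat.mul_div_cancel' (h.add even_two).two_dvd]⟩
    · refine ⟨1, by simp [Nat.not_even_iff_odd.mpr h], ?_⟩
      obtain ⟨k, rfl⟩ := h
      omega
  have pow_a_le : x ^ a ≤ (n : ℝ) ^ ((a : ℝ) / m) := by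
    calc x ^ a = (x ^ m) ^ ((a : ℝ) / m) := by
          rw [← Real.rpow_natCast x m, ← Real.rpow_mul (by linarith), mul_div_cancel₀ _ hm0.ne',
            Real.rpow_natCast]
      _ ≤ _ := by
          gcongr
          exact hxn ▸ pow_le_geomSum hm (zero_le_one.trans hx)
  have pow_m_le := saddle_pow_le hm hmn hx hxn
  rw [cast_a, div_pow, ← pow_mul, two_mul_half, pow_add]
  set M := min (m : ℝ) (Real.log (n / m + 1))
  set N := (n : ℝ) ^ ((a : ℝ) / m)
  calc x ^ m * x ^ a / q ^ ((m + 2) / 2) / n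
      ≤ 6 * (n / m) * M * N / q ^ ((m + 2) / 2) / n := by
        gcongr ?_ / _ / _
        exact mul_le_mul pow_m_le pow_a_le (by positivity)
          ((by positivity : 0 ≤ x ^ m).trans pow_m_le)
    _ = _ := by field_simp

/-- An upper bound less than `1` for `x² / q` when `x ^ m ≤ n` and `m ≥ (2 + ε) log n / log q`. -/
noncomputable def saddleRatio (ε : ℝ) : ℝ := Real.exp (-(ε / (2 + ε) * Real.log 2))

theorem saddleRatio_pos (ε : ℝ) : 0 < saddleRatio ε := Real.exp_pos _

theorem saddleRatio_lt_one {ε : ℝ} (hε : 0 < ε) : saddleRatio ε < 1 :=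
  Real.exp_lt_one_iff.mpr (neg_neg_of_pos (mul_pos (by positivity) (Real.log_pos one_lt_two)))

theorem sq_div_le_saddleRatio {n q ε : ℝ} (hε : 0 < ε) (hq : 2 ≤ q) (hx : 0 < x) (hm : 1 ≤ m)
    (hxn : x ^ m ≤ n) (hmn : (2 + ε) * Real.log n / Real.log q ≤ m) :
    x ^ 2 / q ≤ saddleRatio ε := by
  have log_x_le : (2 + ε) * Real.log x ≤ Real.log q := by
    refine le_of_mul_le_mul_left ?_ (Nat.cast_pos.mpr hm : (0 : ℝ) < m)
    calc m * ((2 + ε) * Real.log x) = (2 + ε) * Real.log (x ^ m) := by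
          rw [Real.log_pow]
          ring
      _ ≤ (2 + ε) * Real.log n := by gcongr
      _ ≤ m * Real.log q := (div_le_iff₀ (Real.log_pos (by linarith))).mp hmn
  rw [saddleRatio, ← Real.log_le_iff_le_exp (by positivity),
    Real.log_div (by positivity) (by positivity), Real.log_pow, Nat.cast_ofNat]
  calc 2 * Real.log x - Real.log q ≤ 2 * (Real.log q / (2 + ε)) - Real.log q := by
        gcongr
        rwa [le_div_iff₀' (by positivity)]
    _ = -(ε / (2 + ε) * Real.log q) := by
        field_simp
        ring
    _ ≤ _ := by gcongr

end SaddlePoint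

end Friable

/-- For every `ε > 0` there exists `C > 0` such that for every prime power
`q` (the cardinality of a finite field `F`) and all `n ≥ m ≥ (2+ε)·log_q n`, writing
`u = n/m` and `a = 1` if `m` is even, `a = 0` if `m` is odd, one has
`|p_{n,m,q}/p_{n,m} − G_q(x)| ≤ C·n^{(1+a)/m}·min{m, log(u+1)}/(m·q^{⌈(m+1)/2⌉})`. -/
theorem stmt11 :
    ∀ ε : ℝ, 0 < ε → ∃ C : ℝ, 0 < C ∧
      ∀ (F : Type) [Field F] [Fintype F], ∀ n m : ℕ, 1 ≤ m → m ≤ n →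
      (2 + ε) * Real.log n / Real.log (Fintype.card F) ≤ (m : ℝ) →
      ∀ x : ℝ, 0 < x → (∑ i ∈ Finset.Icc 1 m, x ^ i) = (n : ℝ) →
      ∀ u : ℝ, u = (n : ℝ) / (m : ℝ) →
      |polyProb F n m / permProb n m - Gq F m x| ≤
        C * (n : ℝ) ^ ((1 + (if Even m then (1 : ℝ) else 0)) / (m : ℝ)) *
          min (m : ℝ) (Real.log (u + 1)) /
          ((m : ℝ) * (Fintype.card F : ℝ) ^ ((m + 2) / 2)) := by
  intro ε hε
  have hr0 := Friable.saddleRatio_pos ε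
  have hr1 := Friable.saddleRatio_lt_one hε
  have hC := Friable.errorConst_pos hr0 hr1
  refine ⟨6 * Friable.errorConst (Friable.saddleRatio ε), by positivity, ?_⟩
  rintro F _ _ n m hm hmn hcond x hx0 hxn _ rfl
  have hq := Friable.two_le_card F
  have hx : 1 ≤ x :=
    Friable.one_le_of_le_geomSum hm hx0.le ((Nat.cast_le.mpr hmn).trans_eq hxn.symm)
  have hxr := Friable.sq_div_le_saddleRatio hε hq hx0 hm
    ((Friable.pow_le_geomSum hm hx0.le).trans_eq hxn) hcond
  refine (Friable.abs_polyProb_div_permProb_sub_Gq_le_errorConst hm hmn hx hxn hr1 hxr).trans ?_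
  refine (mul_le_mul_of_nonneg_left
    (Friable.saddle_sq_div_pow_le hm hmn hx hxn (by positivity)) hC.le).trans_eq ?_
  ring
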